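/- There exist constants L₀>0 and C>0 such that, for all L∈(0,L₀), E(L) ≥ 2 L^{-4/3} ∫₀¹ g(b) db − C L^{-1}. -/

import Mathlib

open MeasureTheory Real Set Filter Topology

noncomputable section

/-- The open square `Q_r = (-r/2, r/2) × (-r/2, r/2)`. -/
def Qsq (r : ℝ) : Set (ℝ × ℝ) := Ioo (-r/2) (r/2) ×ˢ Ioo (-r/2) (r/2)

/-- The vertical strip `S_R = (-R/2, R/2) × ℝ`. -/
def Strip (R : ℝ) : Set (ℝ × ℝ) := Ioo (-R/2) (R/2) ×ˢ (univ : Set ℝ)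

/-- The magnetic potential `A₀(x) = (-x₂/2, x₁/2)` of the constant unit magnetic field. -/
def A₀ (x : ℝ × ℝ) : ℝ × ℝ := (-x.2 / 2, x.1 / 2)

/-- The magnetic potential `A_van(x) = (-x₂²/2, 0)` generating the field `B(x) = x₂`. -/
def Avan (x : ℝ × ℝ) : ℝ × ℝ := (-x.2 ^ 2 / 2, 0)

/-- The magnetic gradient energy density `|(∇ - iA)u|²` at `x`. -/
def magGradSq (A : ℝ × ℝ → ℝ × ℝ) (u : ℝ × ℝ → ℂ) (x : ℝ × ℝ) : ℝ :=
  ‖fderiv ℝ u x (1, 0) - Complex.I * ((A x).1 : ℂ) * u x‖ ^ 2 +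
  ‖fderiv ℝ u x (0, 1) - Complex.I * ((A x).2 : ℂ) * u x‖ ^ 2

/-- The Ginzburg–Landau functional `F_{b,Q_r}` on the square `Q_r`. -/
def Fsq (b r : ℝ) (u : ℝ × ℝ → ℂ) : ℝ :=
  ∫ x in Qsq r, (b * magGradSq A₀ u x - ‖u x‖ ^ 2 + ‖u x‖ ^ 4 / 2)

/-- (Smooth surrogate of) membership in `H¹(Q_r; ℂ)`. -/
def MemH1sq (u : ℝ × ℝ → ℂ) : Prop := ContDiff ℝ 1 u

/-- (Smooth surrogate of) membership in `H¹₀(Q_r; ℂ)`: vanishing on the boundary. -/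
def MemH10sq (r : ℝ) (u : ℝ × ℝ → ℂ) : Prop :=
  ContDiff ℝ 1 u ∧ ∀ x ∈ frontier (Qsq r), u x = 0

/-- The Dirichlet ground-state energy `e_D(b, r)`. -/
def eD (b r : ℝ) : ℝ := sInf (Fsq b r '' {u | MemH10sq r u})

/-- The Neumann ground-state energy `e_N(b, r)`. -/
def eN (b r : ℝ) : ℝ := sInf (Fsq b r '' {u | MemH1sq u})

/-- The energy density of the strip functional `𝓔_{L,R}` at `x`. -/
def stripDensity (L : ℝ) (u : ℝ × ℝ → ℂ) (x : ℝ × ℝ) : ℝ :=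
  magGradSq Avan u x - L ^ (-(2:ℝ)/3) * ‖u x‖ ^ 2 + (L ^ (-(2:ℝ)/3) / 2) * ‖u x‖ ^ 4

/-- The strip functional `𝓔_{L,R}`. -/
def Estrip (L R : ℝ) (u : ℝ × ℝ → ℂ) : ℝ := ∫ x in Strip R, stripDensity L u x

/-- (Surrogate of) membership in the space `H¹_{mag,0}(S_R)`. -/
def MemH1mag0 (R : ℝ) (u : ℝ × ℝ → ℂ) : Prop :=
  ContDiff ℝ 1 u ∧
  IntegrableOn (fun x => ‖u x‖ ^ 2) (Strip R) ∧
  IntegrableOn (magGradSq Avan u) (Strip R) ∧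
  IntegrableOn (fun x => ‖u x‖ ^ 4) (Strip R) ∧
  ∀ x ∈ frontier (Strip R), u x = 0

/-- The ground-state energy `e_gs(L; R)` of the strip functional. -/
def egs (L R : ℝ) : ℝ := sInf (Estrip L R '' {u | MemH1mag0 R u})

/-- `g : (0,∞) → ℝ` is the thermodynamic limit of the Dirichlet square energies. -/
def IsLimitG (g : ℝ → ℝ) : Prop :=
  ∀ b > 0, Tendsto (fun r => eD b r / r ^ 2) atTop (nhds (g b))

/-- `E : (0,∞) → ℝ` is the large-`R` limit of the strip energies. -/
def IsLimitE (E : ℝ → ℝ) : Prop :=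
  ∀ L > 0, Tendsto (fun R => egs L R / R) atTop (nhds (E L))

/-!
The field `curl A_van` equals `x₂`, so it is nearly constant on slabs of unit height, and the
energy of a trial state is compared with energies of the constant-field problem.

Cut a near-minimiser on the strip `S_n` to the slabs `s < x₂ < s + 1` and average over `s ∈ ℝ`; the
localization error is absorbed by raising the mass coefficient from `κ = L^(-2/3)` to `K`. Slabs
with `s ≥ K` (and their mirror images) have nonnegative energy, because the magnetic energy
dominates the field: `∫ curl A |v|² ≤ ∫ |(∇ - iA)v|²`. The slabs meeting `x₂ = 0` contribute only
`O(K² / κ)` per unit length. In the remaining slabs `A_van` may be replaced by its tangent at `s`,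
whose field is the constant `s`; there `n` gauge-shifted copies of the state, stacked on top of each
other and rescaled by `√s`, form a Dirichlet trial state on the square of side `n √s`. This bounds
the slab energy from below by `e_D`, and as `n → ∞` the slabs together give
`2 K ∫ g(s / K) ds = 2 K² ∫₀¹ g`, up to errors, with `K² ≈ L^(-4/3)`.
-/

/-! ### Functions supported in a horizontal slab, and their integrals over the strip -/

section SlabFunctions

variable {F : Type*} [NormedAddCommGroup F] {a b R : ℝ}

lemma measurableSet_strip (R : ℝ) : MeasurableSet (Strip R) :=
  measurableSet_Ioo.prod MeasurableSet.univ

lemma frontier_strip (hR : 0 < R) : frontier (Strip R) = {-R / 2, R / 2} ×ˢ univ := by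
  rw [Strip, frontier_prod_univ_eq, frontier_Ioo (by linarith)]

lemma integrableOn_strip_of_continuous {f : ℝ × ℝ → F} (hf : Continuous f)
    (hf₀ : ∀ x : ℝ × ℝ, x.2 ∉ Ioo a b → f x = 0) : IntegrableOn f (Strip R) := by
  have hcpt : IntegrableOn f (Icc (-R / 2) (R / 2) ×ˢ Icc a b) :=
    hf.continuousOn.integrableOn_compact (isCompact_Icc.prod isCompact_Icc)
  refine (hcpt.mono_set (prod_mono Ioo_subset_Icc_self Ioo_subset_Icc_self)).of_forall_sdiff_eq_zero
    (measurableSet_strip R) fun x hx => hf₀ x fun h => hx.2 ⟨hx.1.1, h⟩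

lemma exists_norm_le_on_strip_of_continuous {f : ℝ × ℝ → F} (hf : Continuous f)
    (hf₀ : ∀ x : ℝ × ℝ, x.2 ∉ Ioo a b → f x = 0) : ∃ M, ∀ x ∈ Strip R, ‖f x‖ ≤ M := by
  obtain ⟨M, hM⟩ := ((isCompact_Icc (a := -R / 2) (b := R / 2)).prod
    (isCompact_Icc (a := a) (b := b))).exists_bound_of_continuousOn hf.continuousOn
  refine ⟨max M 0, fun x hx => ?_⟩
  by_cases h : x.2 ∈ Ioo a b
  · exact (hM x ⟨Ioo_subset_Icc_self hx.1, Ioo_subset_Icc_self h⟩).trans (le_max_left _ _)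
  · simp [hf₀ x h]

variable [NormedSpace ℝ F]

lemma setIntegral_strip_comp_add (R h : ℝ) (f : ℝ × ℝ → F) :
    ∫ x in Strip R, f (x + (0, h)) = ∫ x in Strip R, f x := by
  have hpre : (· + ((0, h) : ℝ × ℝ)) ⁻¹' Strip R = Strip R := by ext x; simp [Strip]
  conv_lhs => rw [← hpre]
  exact (measurePreserving_add_right volume _).setIntegral_preimage_emb
    (measurableEmbedding_addRight _) f (Strip R)

lemma setIntegral_strip_comp_reflect (R : ℝ) (f : ℝ × ℝ → F) :
    ∫ x in Strip R, f (x.1, -x.2) = ∫ x in Strip R, f x := by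
  have hpre : Prod.map id Neg.neg ⁻¹' Strip R = Strip R := by ext x; simp [Strip]
  have hmp : MeasurePreserving (Prod.map id Neg.neg : ℝ × ℝ → ℝ × ℝ) volume volume :=
    (MeasurePreserving.id volume).prod (Measure.measurePreserving_neg volume)
  conv_lhs => rw [← hpre]
  exact hmp.setIntegral_preimage_emb
    (MeasurableEquiv.prodCongr (.refl ℝ) (.neg ℝ)).measurableEmbedding f (Strip R)

lemma setIntegral_strip_comp_smul_sub {r : ℝ} (hr : 0 < r) (R c : ℝ) (f : ℝ × ℝ → F) :
    ∫ z in Strip (R * r), f (r⁻¹ • z - (0, c)) = r ^ 2 • ∫ x in Strip R, f x := by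
  have hmem : ∀ z, r⁻¹ • z - ((0, c) : ℝ × ℝ) ∈ Strip R ↔ z ∈ Strip (R * r) := fun z => by
    have hdiv : r⁻¹ * z.1 = z.1 / r := by ring
    simp [Strip, hdiv, lt_div_iff₀ hr, div_lt_iff₀ hr, neg_div, div_mul_eq_mul_div]
  calc ∫ z in Strip (R * r), f (r⁻¹ • z - (0, c))
      = ∫ z, (Strip R).indicator f (r⁻¹ • z - (0, c)) := by
        rw [← integral_indicator (measurableSet_strip _)]
        exact integral_congr_ae (.of_forall fun z => by classical simp only [indicator_apply, hmem])
    _ = r ^ 2 • ∫ x, (Strip R).indicator f (x - (0, c)) := by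
        simpa [Module.finrank_prod, abs_of_pos hr] using Measure.integral_comp_inv_smul
          (volume : Measure (ℝ × ℝ)) (fun x => (Strip R).indicator f (x - (0, c))) r
    _ = r ^ 2 • ∫ x in Strip R, f x := by
        rw [integral_sub_right_eq_self, integral_indicator (measurableSet_strip R)]

/-- `v` is a `C¹` function vanishing outside the slab `a < x₂ < b`. -/
structure IsSlabFun (a b : ℝ) (v : ℝ × ℝ → F) : Prop where
  contDiff : ContDiff ℝ 1 v
  eq_zero : ∀ x : ℝ × ℝ, x.2 ∉ Ioo a b → v x = 0

namespace IsSlabFun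

variable {v : ℝ × ℝ → F}

lemma continuous_fderiv (hv : IsSlabFun a b v) : Continuous (fderiv ℝ v) :=
  hv.contDiff.continuous_fderiv one_ne_zero

lemma differentiable (hv : IsSlabFun a b v) : Differentiable ℝ v :=
  hv.contDiff.differentiable one_ne_zero

lemma fderiv_eq_zero (hv : IsSlabFun a b v) {x : ℝ × ℝ} (hx : x.2 ∉ Ioo a b) :
    fderiv ℝ v x = 0 := by
  have hopen : IsOpen {y : ℝ × ℝ | y.2 ∉ Icc a b} :=
    (isClosed_Icc.preimage continuous_snd).isOpen_compl
  have hout : EqOn (fderiv ℝ v) 0 {y : ℝ × ℝ | y.2 ∉ Icc a b} := fun y hy => by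
    have : v =ᶠ[𝓝 y] fun _ => 0 := by
      filter_upwards [hopen.mem_nhds hy] with z hz
      exact hv.eq_zero z fun h => hz (Ioo_subset_Icc_self h)
    simp [this.fderiv_eq]
  refine hout.closure hv.continuous_fderiv continuous_const ?_
  have hset : {y : ℝ × ℝ | y.2 ∉ Icc a b} = univ ×ˢ (Icc a b)ᶜ := by ext; simp
  rw [hset, closure_prod_eq, closure_compl, interior_Icc]
  exact ⟨subset_closure trivial, hx⟩

lemma const_smul (hv : IsSlabFun a b v) (c : ℝ) : IsSlabFun a b (c • v) :=
  ⟨hv.contDiff.const_smul c, fun x hx => by simp [hv.eq_zero x hx]⟩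

lemma reflect (hv : IsSlabFun a b v) : IsSlabFun (-b) (-a) fun x : ℝ × ℝ => v (x.1, -x.2) :=
  ⟨hv.contDiff.comp (contDiff_fst.prodMk contDiff_snd.neg), fun _ hx =>
    hv.eq_zero _ fun h => hx ⟨by linarith [h.2], by linarith [h.1]⟩⟩

end IsSlabFun

lemma setIntegral_strip_fderiv_fst {f : ℝ × ℝ → ℝ} (hR : 0 < R) (hf : IsSlabFun a b f)
    (hf₀ : ∀ x ∈ frontier (Strip R), f x = 0) : ∫ x in Strip R, fderiv ℝ f x (1, 0) = 0 := by
  have hc := hf.continuous_fderiv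
  have hi : IntegrableOn (fun x => fderiv ℝ f x (1, 0)) (Strip R) :=
    integrableOn_strip_of_continuous (by fun_prop) fun x (hx : x.2 ∉ Ioo a b) => by
      simp [hf.fderiv_eq_zero hx]
  rw [Strip, Measure.volume_eq_prod, IntegrableOn, ← Measure.prod_restrict] at hi
  rw [Strip, Measure.volume_eq_prod, ← Measure.prod_restrict, integral_prod_symm _ hi]
  refine integral_eq_zero_of_ae (.of_forall fun y => ?_)
  have hderiv : ∀ x, HasDerivAt (fun x => f (x, y)) (fderiv ℝ f (x, y) (1, 0)) x := fun x =>
    (hf.differentiable (x, y)).hasFDerivAt.comp_hasDerivAt x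
      ((hasDerivAt_id x).prodMk (hasDerivAt_const x y))
  calc ∫ x in Ioo (-R / 2) (R / 2), fderiv ℝ f (x, y) (1, 0)
      = ∫ x in (-R / 2)..(R / 2), fderiv ℝ f (x, y) (1, 0) := by
        rw [← integral_Ioc_eq_integral_Ioo, intervalIntegral.integral_of_le (by linarith)]
    _ = f (R / 2, y) - f (-R / 2, y) :=
        intervalIntegral.integral_eq_sub_of_hasDerivAt (fun x _ => hderiv x)
          (Continuous.intervalIntegrable (by fun_prop) _ _)
    _ = 0 := by simp [hf₀, frontier_strip hR]

lemma setIntegral_strip_fderiv_snd {f : ℝ × ℝ → ℝ} (hf : IsSlabFun a b f) :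
    ∫ x in Strip R, fderiv ℝ f x (0, 1) = 0 := by
  have hc := hf.continuous_fderiv
  have hcf := hf.contDiff.continuous
  have hi : IntegrableOn (fun x => fderiv ℝ f x (0, 1)) (Strip R) :=
    integrableOn_strip_of_continuous (by fun_prop) fun x (hx : x.2 ∉ Ioo a b) => by
      simp [hf.fderiv_eq_zero hx]
  rw [Strip, Measure.volume_eq_prod, IntegrableOn, ← Measure.prod_restrict] at hi
  rw [Strip, Measure.volume_eq_prod, ← Measure.prod_restrict, integral_prod _ hi]
  refine integral_eq_zero_of_ae (.of_forall fun x => ?_)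
  have hint {G : ℝ × ℝ → ℝ} (hG : Continuous G) (hG₀ : ∀ z : ℝ × ℝ, z.2 ∉ Ioo a b → G z = 0) :
      Integrable fun y => G (x, y) :=
    Continuous.integrable_of_hasCompactSupport (by fun_prop) <|
      HasCompactSupport.intro (isCompact_Icc (a := a) (b := b)) fun y hy =>
        hG₀ _ fun h => hy (Ioo_subset_Icc_self h)
  rw [Measure.restrict_univ]
  refine integral_eq_zero_of_hasDerivAt_of_integrable (f := fun y => f (x, y)) (fun y => ?_)
    (hint (G := fun z => fderiv ℝ f z (0, 1)) (by fun_prop) fun z hz => by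
      simp [hf.fderiv_eq_zero hz]) (hint hcf hf.eq_zero)
  exact (hf.differentiable (x, y)).hasFDerivAt.comp_hasDerivAt y
    ((hasDerivAt_const y x).prodMk (hasDerivAt_id y))

end SlabFunctions

/-! ### The Jacobian is a null Lagrangian -/

section Jacobian

variable {F : Type*} [NormedAddCommGroup F] [NormedSpace ℝ F] {a b R : ℝ} {v : ℝ × ℝ → F}

lemma eq_zero_of_hasDerivAt_of_even {φ : ℝ → ℝ} {d : ℝ} (h : HasDerivAt φ d 0)
    (hφ : φ.Even) : d = 0 := by
  have hneg := deriv_comp_neg φ 0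
  rw [funext hφ, neg_zero, h.deriv] at hneg
  linarith

/- Integrating `∂₁ (B (v x) (v (x + h e₂)))` over the strip gives zero, and translating one of the
two resulting terms by `-h e₂` turns it into the other one at `-h`. -/
lemma even_setIntegral_strip_fderiv_fst_shift (B : F →L[ℝ] F →L[ℝ] ℝ) (hB : ∀ y z, B y z = -B z y)
    (hR : 0 < R) (hv : IsSlabFun a b v) (hv₀ : ∀ x ∈ frontier (Strip R), v x = 0) :
    Function.Even fun h : ℝ => ∫ x in Strip R, B (fderiv ℝ v x (1, 0)) (v (x + (0, h))) := by
  intro h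
  have hc := hv.contDiff.continuous
  have hc' := hv.continuous_fderiv
  have hderiv (x) : HasFDerivAt (fun x => B (v x) (v (x + (0, h))))
      (B.precompR (ℝ × ℝ) (v x) (fderiv ℝ v (x + (0, h))) +
        B.precompL (ℝ × ℝ) (fderiv ℝ v x) (v (x + (0, h)))) x :=
    B.hasFDerivAt_of_bilinear (hv.differentiable x).hasFDerivAt
      ((hasFDerivAt_comp_add_right _).2 (hv.differentiable _).hasFDerivAt)
  have hslab : IsSlabFun a b fun x => B (v x) (v (x + (0, h))) :=
    ⟨B.isBoundedBilinearMap.contDiff.comp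
      (hv.contDiff.prodMk (hv.contDiff.comp (contDiff_id.add contDiff_const))),
      fun x hx => by simp [hv.eq_zero x hx]⟩
  have hdiv := setIntegral_strip_fderiv_fst hR hslab fun x hx => by simp [hv₀ x hx]
  have hi₁ : IntegrableOn (fun x => B (fderiv ℝ v x (1, 0)) (v (x + (0, h)))) (Strip R) :=
    integrableOn_strip_of_continuous (by fun_prop) fun x (hx : x.2 ∉ Ioo a b) => by
      simp [hv.fderiv_eq_zero hx]
  have hi₂ : IntegrableOn (fun x => B (fderiv ℝ v (x + (0, h)) (1, 0)) (v x)) (Strip R) :=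
    integrableOn_strip_of_continuous (by fun_prop) fun x (hx : x.2 ∉ Ioo a b) => by
      simp [hv.eq_zero x hx]
  have hexp (x) : fderiv ℝ (fun x => B (v x) (v (x + (0, h)))) x (1, 0) =
      B (fderiv ℝ v x (1, 0)) (v (x + (0, h))) - B (fderiv ℝ v (x + (0, h)) (1, 0)) (v x) := by
    rw [(hderiv x).fderiv, hB (fderiv ℝ v (x + (0, h)) (1, 0))]
    simp
    ring
  simp_rw [hexp] at hdiv
  rw [integral_sub hi₁ hi₂, sub_eq_zero] at hdiv
  beta_reduce
  rw [hdiv, ← setIntegral_strip_comp_add R h]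
  simp [add_assoc, Prod.mk_zero_zero]

theorem setIntegral_strip_jacobian_eq_zero (B : F →L[ℝ] F →L[ℝ] ℝ) (hB : ∀ y z, B y z = -B z y)
    (hR : 0 < R) (hv : IsSlabFun a b v) (hv₀ : ∀ x ∈ frontier (Strip R), v x = 0) :
    ∫ x in Strip R, B (fderiv ℝ v x (1, 0)) (fderiv ℝ v x (0, 1)) = 0 := by
  have hc := hv.contDiff.continuous
  have hc' := hv.continuous_fderiv
  obtain ⟨M, hM⟩ := exists_norm_le_on_strip_of_continuous (R := R)
    (f := fun x => fderiv ℝ v x (0, 1)) (by fun_prop) (a := a) (b := b)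
    fun x hx => by simp [hv.fderiv_eq_zero hx]
  have hint {f : ℝ × ℝ → F} (hf : Continuous f) :
      IntegrableOn (fun x => B (fderiv ℝ v x (1, 0)) (f x)) (Strip R) :=
    integrableOn_strip_of_continuous (by fun_prop) fun x (hx : x.2 ∉ Ioo a b) => by
      simp [hv.fderiv_eq_zero hx]
  have hbound : IntegrableOn (fun x => ‖B (fderiv ℝ v x (1, 0))‖ * M) (Strip R) :=
    integrableOn_strip_of_continuous (by fun_prop) fun x (hx : x.2 ∉ Ioo a b) => by
      simp [hv.fderiv_eq_zero hx]
  have hline (x : ℝ × ℝ) (h : ℝ) :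
      HasDerivAt (fun h : ℝ => v (x + (0, h))) (fderiv ℝ v (x + (0, h)) (0, 1)) h :=
    (hv.differentiable _).hasFDerivAt.comp_hasDerivAt h
      (((hasDerivAt_const h (0 : ℝ)).prodMk (hasDerivAt_id h)).const_add x)
  have hderiv := (hasDerivAt_integral_of_dominated_loc_of_deriv_le (μ := volume.restrict (Strip R))
    (F := fun h x => B (fderiv ℝ v x (1, 0)) (v (x + (0, h))))
    (F' := fun h x => B (fderiv ℝ v x (1, 0)) (fderiv ℝ v (x + (0, h)) (0, 1)))
    (x₀ := 0) (bound := fun x => ‖B (fderiv ℝ v x (1, 0))‖ * M) univ_mem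
    (.of_forall fun h => (hint (by fun_prop)).aestronglyMeasurable) (hint (by fun_prop))
    (hint (by fun_prop)).aestronglyMeasurable
    ((ae_restrict_mem (measurableSet_strip R)).mono fun x hx h _ =>
      ((B _).le_opNorm _).trans (by gcongr; exact hM _ (by simpa [Strip] using hx)))
    hbound (.of_forall fun x h _ => (B (fderiv ℝ v x (1, 0))).hasFDerivAt.comp_hasDerivAt h
      (hline x h))).2
  simpa [Prod.mk_zero_zero] using
    eq_zero_of_hasDerivAt_of_even hderiv (even_setIntegral_strip_fderiv_fst_shift B hB hR hv hv₀)

end Jacobian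

/-! ### Magnetic derivatives and the curl inequality -/

/-- The magnetic derivative `(∂ₑ - i A·e) u` in the direction `e`. -/
def magDeriv (A : ℝ × ℝ → ℝ × ℝ) (u : ℝ × ℝ → ℂ) (x e : ℝ × ℝ) : ℂ :=
  fderiv ℝ u x e - Complex.I * ((A x).1 * e.1 + (A x).2 * e.2 : ℝ) * u x

/-- The magnetic field `∂₁ A₂ - ∂₂ A₁` generated by the potential `A`. -/
def curl (A : ℝ × ℝ → ℝ × ℝ) (x : ℝ × ℝ) : ℝ :=
  (fderiv ℝ A x (1, 0)).2 - (fderiv ℝ A x (0, 1)).1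

section MagneticDerivative

variable {A : ℝ × ℝ → ℝ × ℝ} {u : ℝ × ℝ → ℂ} {a b R : ℝ}

lemma magGradSq_eq (A : ℝ × ℝ → ℝ × ℝ) (u : ℝ × ℝ → ℂ) (x : ℝ × ℝ) :
    magGradSq A u x = ‖magDeriv A u x (1, 0)‖ ^ 2 + ‖magDeriv A u x (0, 1)‖ ^ 2 := by
  simp [magGradSq, magDeriv]

lemma magGradSq_nonneg (A : ℝ × ℝ → ℝ × ℝ) (u : ℝ × ℝ → ℂ) (x : ℝ × ℝ) :
    0 ≤ magGradSq A u x := by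
  rw [magGradSq_eq]; positivity

lemma continuous_magGradSq (hA : Continuous A) (hu : ContDiff ℝ 1 u) :
    Continuous (magGradSq A u) := by
  have := hu.continuous_fderiv one_ne_zero
  have hc := hu.continuous
  unfold magGradSq
  fun_prop

lemma magDeriv_eq_zero {x : ℝ × ℝ} (hx : u x = 0) (hx' : fderiv ℝ u x = 0) (e : ℝ × ℝ) :
    magDeriv A u x e = 0 := by
  simp [magDeriv, hx, hx']

lemma magGradSq_eq_zero {x : ℝ × ℝ} (hx : u x = 0) (hx' : fderiv ℝ u x = 0) :
    magGradSq A u x = 0 := by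
  simp [magGradSq_eq, magDeriv_eq_zero hx hx']

lemma magGradSq_const_smul (A : ℝ × ℝ → ℝ × ℝ) (c : ℝ) (u : ℝ × ℝ → ℂ) (x : ℝ × ℝ) :
    magGradSq A (c • u) x = c ^ 2 * magGradSq A u x := by
  have h (e : ℝ × ℝ) : magDeriv A (c • u) x e = c * magDeriv A u x e := by
    rw [magDeriv, magDeriv, fderiv_const_smul_field]
    simp
    ring
  simp [magGradSq_eq, h, mul_pow]
  ring

lemma magDeriv_smul {f : ℝ × ℝ → ℝ} {x : ℝ × ℝ} (hf : DifferentiableAt ℝ f x)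
    (hu : DifferentiableAt ℝ u x) (e : ℝ × ℝ) :
    magDeriv A (fun y => f y • u y) x e = f x • magDeriv A u x e + fderiv ℝ f x e • u x := by
  rw [magDeriv, magDeriv, fderiv_fun_smul hf hu]
  simp
  ring

/- `0 ≤ ‖D₁u + i D₂u‖²`, expanded; all terms other than the energy and the field are divergences
or a Jacobian. -/
lemma curl_mul_norm_sq_le (hA : Differentiable ℝ A) (hu : Differentiable ℝ u) (x : ℝ × ℝ) :
    curl A x * ‖u x‖ ^ 2 ≤ magGradSq A u x
      - 2 * inner ℝ (Complex.I * fderiv ℝ u x (1, 0)) (fderiv ℝ u x (0, 1))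
      + fderiv ℝ (fun y => (A y).2 * ‖u y‖ ^ 2) x (1, 0)
      - fderiv ℝ (fun y => (A y).1 * ‖u y‖ ^ 2) x (0, 1) := by
  have hsq : 0 ≤ ‖magDeriv A u x (1, 0) + Complex.I * magDeriv A u x (0, 1)‖ ^ 2 := sq_nonneg _
  have hnorm := (hu x).hasFDerivAt.norm_sq
  rw [((hA x).hasFDerivAt.snd.fun_mul hnorm).fderiv, ((hA x).hasFDerivAt.fst.fun_mul hnorm).fderiv,
    curl]
  refine sub_nonneg.1 (hsq.trans_eq ?_)
  simp only [magGradSq, magDeriv, Complex.sq_norm, Complex.normSq_apply, Complex.inner]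
  simp
  ring

end MagneticDerivative

theorem setIntegral_strip_curl_mul_norm_sq_le {A : ℝ × ℝ → ℝ × ℝ} {v : ℝ × ℝ → ℂ} {a b R : ℝ}
    (hA : ContDiff ℝ 1 A) (hR : 0 < R) (hv : IsSlabFun a b v)
    (hv₀ : ∀ x ∈ frontier (Strip R), v x = 0) :
    ∫ x in Strip R, curl A x * ‖v x‖ ^ 2 ≤ ∫ x in Strip R, magGradSq A v x := by
  have hAc := hA.continuous
  have := hA.continuous_fderiv one_ne_zero
  have hvc := hv.contDiff.continuous
  have hv' := hv.continuous_fderiv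
  have hslab {f : ℝ × ℝ → ℝ} (hf : ContDiff ℝ 1 f) : IsSlabFun a b fun x => f x * ‖v x‖ ^ 2 :=
    ⟨hf.mul (hv.contDiff.norm_sq ℝ), fun x hx => by simp [hv.eq_zero x hx]⟩
  have hs₁ := hslab hA.fst
  have hs₂ := hslab hA.snd
  have hint {f : ℝ × ℝ → ℝ} (hf : Continuous f) (hf₀ : ∀ x : ℝ × ℝ, x.2 ∉ Ioo a b → f x = 0) :
      IntegrableOn f (Strip R) := integrableOn_strip_of_continuous hf hf₀
  have hi₀ := hint (continuous_magGradSq hAc hv.contDiff)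
    fun x hx => magGradSq_eq_zero (hv.eq_zero x hx) (hv.fderiv_eq_zero hx)
  have hiJ := hint
    (f := fun x => 2 * inner ℝ (Complex.I * fderiv ℝ v x (1, 0)) (fderiv ℝ v x (0, 1)))
    (by fun_prop) fun x hx => by simp [hv.fderiv_eq_zero hx]
  have hi₁ := hint (hs₁.continuous_fderiv.clm_apply (continuous_const (y := (0, 1))))
    fun x hx => by simp [hs₁.fderiv_eq_zero hx]
  have hi₂ := hint (hs₂.continuous_fderiv.clm_apply (continuous_const (y := (1, 0))))
    fun x hx => by simp [hs₂.fderiv_eq_zero hx]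
  have hJ : ∫ x in Strip R,
      inner ℝ (Complex.I * fderiv ℝ v x (1, 0)) (fderiv ℝ v x (0, 1)) = 0 :=
    setIntegral_strip_jacobian_eq_zero ((innerSL ℝ).comp (ContinuousLinearMap.mul ℝ ℂ Complex.I))
      (fun y z => by simp; ring) hR hv hv₀
  have hmono := integral_mono (hint (by unfold curl; fun_prop) fun x hx => by
    simp [hv.eq_zero x hx]) (((hi₀.sub hiJ).add hi₂).sub hi₁)
    (curl_mul_norm_sq_le (hA.differentiable one_ne_zero) hv.differentiable)
  rwa [integral_sub' ((hi₀.sub hiJ).add hi₂) hi₁, integral_add' (hi₀.sub hiJ) hi₂,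
    integral_sub' hi₀ hiJ, integral_const_mul, hJ, setIntegral_strip_fderiv_snd hs₁,
    setIntegral_strip_fderiv_fst hR hs₂ fun x hx => by simp [hv₀ x hx], mul_zero, sub_zero,
    add_zero, sub_zero] at hmono

lemma contDiff_Avan : ContDiff ℝ 1 Avan := by unfold Avan; fun_prop

lemma curl_Avan (x : ℝ × ℝ) : curl Avan x = x.2 := by
  have h : HasFDerivAt Avan (((-x.2) • ContinuousLinearMap.snd ℝ ℝ ℝ).prod 0) x := by
    refine HasFDerivAt.prodMk ?_ (hasFDerivAt_const 0 x)
    have hsq : HasDerivAt (fun t : ℝ => -t ^ 2 / 2) (-x.2) x.2 :=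
      ((hasDerivAt_pow 2 x.2).neg.div_const 2).congr_deriv (by simp; ring)
    exact hsq.comp_hasFDerivAt x hasFDerivAt_snd
  simp [curl, h.fderiv]

/-! ### Ginzburg–Landau densities and the Dirichlet energy of squares -/

/-- The energy density `t |(∇ - iA)u|² - K |u|² + (κ/2) |u|⁴`, covering both the square functional
(`A = A₀`, `K = κ = 1`) and the strip functional (`A = Avan`, `t = 1`, `K = κ`). -/
def glDensity (A : ℝ × ℝ → ℝ × ℝ) (t K κ : ℝ) (u : ℝ × ℝ → ℂ) (x : ℝ × ℝ) : ℝ :=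
  t * magGradSq A u x - K * ‖u x‖ ^ 2 + κ / 2 * ‖u x‖ ^ 4

section Density

variable {A : ℝ × ℝ → ℝ × ℝ} {t K κ : ℝ} {u : ℝ × ℝ → ℂ} {a b : ℝ}

lemma continuous_glDensity (hA : Continuous A) (t K κ : ℝ) (hu : ContDiff ℝ 1 u) :
    Continuous (glDensity A t K κ u) := by
  have h := continuous_magGradSq hA hu
  have hc := hu.continuous
  unfold glDensity
  fun_prop

lemma IsSlabFun.glDensity_eq_zero (hu : IsSlabFun a b u) {x : ℝ × ℝ} (hx : x.2 ∉ Ioo a b) :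
    glDensity A t K κ u x = 0 := by
  simp [glDensity, magGradSq_eq_zero (hu.eq_zero x hx) (hu.fderiv_eq_zero hx), hu.eq_zero x hx]

lemma IsSlabFun.integrableOn_glDensity (hu : IsSlabFun a b u) (hA : Continuous A) (t K κ R : ℝ) :
    IntegrableOn (glDensity A t K κ u) (Strip R) :=
  integrableOn_strip_of_continuous (continuous_glDensity hA t K κ hu.contDiff)
    fun _ => hu.glDensity_eq_zero

lemma neg_le_glDensity (A : ℝ × ℝ → ℝ × ℝ) (ht : 0 ≤ t) (K : ℝ) (hκ : 0 < κ) (u : ℝ × ℝ → ℂ)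
    (x : ℝ × ℝ) : -(K ^ 2 / (2 * κ)) ≤ glDensity A t K κ u x := by
  have hmag : 0 ≤ t * magGradSq A u x := mul_nonneg ht (magGradSq_nonneg A u x)
  have hsq : glDensity A t K κ u x =
      t * magGradSq A u x + (κ * ‖u x‖ ^ 2 - K) ^ 2 / (2 * κ) - K ^ 2 / (2 * κ) := by
    rw [glDensity]; field_simp; ring
  have : 0 ≤ (κ * ‖u x‖ ^ 2 - K) ^ 2 / (2 * κ) := by positivity
  linarith

lemma glDensity_sum_of_monotone {y : ℕ → ℝ} (hy : Monotone y) {W : ℕ → ℝ × ℝ → ℂ}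
    (hW : ∀ k, IsSlabFun (y k) (y (k + 1)) (W k)) (n : ℕ) (x : ℝ × ℝ) :
    glDensity A t K κ (fun z => ∑ k ∈ Finset.range n, W k z) x =
      ∑ k ∈ Finset.range n, glDensity A t K κ (W k) x := by
  obtain ⟨k₀, hk₀⟩ : ∃ k₀, ∀ j ≠ k₀, x.2 ∉ Ioo (y j) (y (j + 1)) := by
    by_cases h : ∃ k₀, x.2 ∈ Ioo (y k₀) (y (k₀ + 1))
    · obtain ⟨k₀, hk₀⟩ := h
      exact ⟨k₀, fun j hj hj' =>
        (hy.pairwise_disjoint_on_Ioo_succ hj).le_bot ⟨hj', hk₀⟩⟩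
    · exact ⟨0, fun j _ hj => h ⟨j, hj⟩⟩
  have hval : ∀ j ∈ Finset.range n, j ≠ k₀ → W j x = 0 := fun j _ hj => (hW j).eq_zero x (hk₀ j hj)
  have hder : ∀ j ∈ Finset.range n, j ≠ k₀ → fderiv ℝ (W j) x = 0 := fun j _ hj =>
    (hW j).fderiv_eq_zero (hk₀ j hj)
  have hden : ∀ j ∈ Finset.range n, j ≠ k₀ → glDensity A t K κ (W j) x = 0 := fun j _ hj =>
    (hW j).glDensity_eq_zero (hk₀ j hj)
  have hsum := fderiv_fun_sum (u := Finset.range n) fun k _ => (hW k).differentiable x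
  by_cases hk : k₀ ∈ Finset.range n
  · simp only [glDensity, magGradSq, hsum, Finset.sum_eq_single_of_mem k₀ hk hval,
      Finset.sum_eq_single_of_mem k₀ hk hder]
    exact (Finset.sum_eq_single_of_mem k₀ hk hden).symm
  · have hne : ∀ j ∈ Finset.range n, j ≠ k₀ := fun j hj h => hk (h ▸ hj)
    rw [Finset.sum_eq_zero fun j hj => hden j hj (hne j hj)]
    simp only [glDensity, magGradSq, hsum, Finset.sum_eq_zero fun j hj => hval j hj (hne j hj),
      Finset.sum_eq_zero fun j hj => hder j hj (hne j hj)]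
    simp

end Density

section DirichletEnergy

variable {b b' r : ℝ} {u : ℝ × ℝ → ℂ} {g : ℝ → ℝ}

lemma continuous_A₀ : Continuous A₀ := by unfold A₀; fun_prop

lemma measurableSet_Qsq (r : ℝ) : MeasurableSet (Qsq r) := measurableSet_Ioo.prod measurableSet_Ioo

lemma volume_Qsq (r : ℝ) : volume (Qsq r) = ENNReal.ofReal r * ENNReal.ofReal r := by
  rw [Qsq, Measure.volume_eq_prod, Measure.prod_prod, Real.volume_Ioo]
  ring_nf

lemma Fsq_eq_integral_glDensity (b r : ℝ) (u : ℝ × ℝ → ℂ) :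
    Fsq b r u = ∫ x in Qsq r, glDensity A₀ b 1 1 u x := by
  simp only [Fsq, glDensity, one_mul, one_div_mul_eq_div]

lemma integrableOn_Qsq_glDensity (b r : ℝ) (hu : ContDiff ℝ 1 u) :
    IntegrableOn (glDensity A₀ b 1 1 u) (Qsq r) :=
  ((continuous_glDensity continuous_A₀ b 1 1 hu).continuousOn.integrableOn_compact
    (isCompact_Icc.prod isCompact_Icc)).mono_set
    (prod_mono Ioo_subset_Icc_self Ioo_subset_Icc_self)

lemma neg_le_Fsq (hb : 0 ≤ b) (hr : 0 ≤ r) (hu : ContDiff ℝ 1 u) :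
    -(1 / 2) * r ^ 2 ≤ Fsq b r u := by
  have hvol : volume.real (Qsq r) = r ^ 2 := by
    rw [Measure.real, volume_Qsq, ENNReal.toReal_mul, ENNReal.toReal_ofReal hr, sq]
  rw [Fsq_eq_integral_glDensity, ← hvol]
  refine setIntegral_ge_of_const_le_real (measurableSet_Qsq r) ?_ (fun x _ => ?_)
    (integrableOn_Qsq_glDensity b r hu)
  · exact volume_Qsq r ▸ ENNReal.mul_ne_top ENNReal.ofReal_ne_top ENNReal.ofReal_ne_top
  · exact (by norm_num : -(1 / 2 : ℝ) = -(1 ^ 2 / (2 * 1))).le.trans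
      (neg_le_glDensity A₀ hb 1 one_pos u x)

lemma bddBelow_Fsq (hb : 0 ≤ b) (hr : 0 ≤ r) : BddBelow (Fsq b r '' {u | MemH10sq r u}) :=
  ⟨-(1 / 2) * r ^ 2, by rintro _ ⟨u, hu, rfl⟩; exact neg_le_Fsq hb hr hu.1⟩

lemma memH10sq_zero (r : ℝ) : MemH10sq r 0 := ⟨contDiff_const, fun _ _ => rfl⟩

lemma eD_nonpos (hb : 0 ≤ b) (hr : 0 ≤ r) : eD b r ≤ 0 :=
  csInf_le (bddBelow_Fsq hb hr) ⟨0, memH10sq_zero r, by simp [Fsq, magGradSq]⟩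

lemma neg_le_eD (hb : 0 ≤ b) (hr : 0 ≤ r) : -(1 / 2) * r ^ 2 ≤ eD b r :=
  le_csInf ⟨_, 0, memH10sq_zero r, rfl⟩ <| by
    rintro _ ⟨u, hu, rfl⟩; exact neg_le_Fsq hb hr hu.1

lemma neg_half_le_eD_div (hb : 0 ≤ b) (hr : 0 < r) : -(1 / 2) ≤ eD b r / r ^ 2 := by
  rw [le_div_iff₀ (by positivity)]
  exact neg_le_eD hb hr.le

lemma eD_mono (hb : 0 ≤ b) (hbb' : b ≤ b') (hr : 0 ≤ r) : eD b r ≤ eD b' r := by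
  refine le_csInf ⟨_, 0, memH10sq_zero r, rfl⟩ ?_
  rintro _ ⟨u, hu, rfl⟩
  refine (csInf_le (bddBelow_Fsq hb hr) ⟨u, hu, rfl⟩).trans ?_
  rw [Fsq_eq_integral_glDensity, Fsq_eq_integral_glDensity]
  refine integral_mono (integrableOn_Qsq_glDensity b r hu.1)
    (integrableOn_Qsq_glDensity b' r hu.1) fun x => ?_
  have := magGradSq_nonneg A₀ u x
  simp only [glDensity]
  gcongr

namespace IsLimitG

lemma neg_half_le (hg : IsLimitG g) (hb : 0 < b) : -(1 / 2) ≤ g b :=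
  ge_of_tendsto (hg b hb) <| (eventually_gt_atTop 0).mono fun _ hr => neg_half_le_eD_div hb.le hr

lemma nonpos (hg : IsLimitG g) (hb : 0 < b) : g b ≤ 0 :=
  le_of_tendsto (hg b hb) <| (eventually_gt_atTop 0).mono fun _ hr =>
    div_nonpos_of_nonpos_of_nonneg (eD_nonpos hb.le (le_of_lt hr)) (sq_nonneg _)

lemma monotoneOn (hg : IsLimitG g) : MonotoneOn g (Ioi 0) := fun b hb b' hb' hbb' =>
  le_of_tendsto_of_tendsto (hg b hb) (hg b' hb') <| (eventually_gt_atTop 0).mono fun _ hr =>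
    div_le_div_of_nonneg_right (eD_mono (le_of_lt hb) hbb' (le_of_lt hr)) (sq_nonneg _)

lemma norm_le_half (hg : IsLimitG g) (hb : 0 < b) : ‖g b‖ ≤ 1 / 2 :=
  abs_le.2 ⟨hg.neg_half_le hb, (hg.nonpos hb).trans (by norm_num)⟩

end IsLimitG

lemma eD_le_of_isSlabFun (hb : 0 ≤ b) (hr : 0 < r) (hu : IsSlabFun (-r / 2) (r / 2) u)
    (hu₀ : ∀ x ∈ frontier (Strip r), u x = 0) :
    eD b r ≤ ∫ x in Strip r, glDensity A₀ b 1 1 u x := by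
  have hint : ∫ x in Strip r, glDensity A₀ b 1 1 u x = Fsq b r u := by
    rw [Fsq_eq_integral_glDensity]
    exact setIntegral_eq_of_subset_of_forall_sdiff_eq_zero (measurableSet_strip r)
      (prod_mono_right (subset_univ _)) fun x hx =>
        hu.glDensity_eq_zero fun h => hx.2 ⟨hx.1.1, h⟩
  refine hint ▸ csInf_le (bddBelow_Fsq hb hr.le) ⟨u, ⟨hu.contDiff, fun x hx => ?_⟩, rfl⟩
  rw [Qsq, frontier_prod_eq] at hx
  rcases hx with hx | hx
  · refine hu.eq_zero x fun h => ?_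
    rw [← isOpen_Ioo.interior_eq] at h
    exact hx.2.2 h
  · exact hu₀ x (by rw [Strip, frontier_prod_univ_eq]; exact ⟨hx.1, trivial⟩)

end DirichletEnergy

/-! ### Tiling a square with gauge-transformed copies of a slab function -/

/-- The tangent to `Avan` at height `s`: the Landau potential of the constant field `s`, with the
additive constant that makes it agree with `Avan` to first order on `x₂ = s`. -/
def tangentPotential (s : ℝ) (x : ℝ × ℝ) : ℝ × ℝ := (-(s * x.2) + s ^ 2 / 2, 0)

lemma continuous_tangentPotential (s : ℝ) : Continuous (tangentPotential s) := by
  unfold tangentPotential; fun_prop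

/-- The copy of `w`, dilated by `r` and translated by `r c` upwards, in the gauge in which the
potential `tangentPotential (r ^ 2)` of `w` becomes `A₀`. -/
def gaugedCopy (r c : ℝ) (w : ℝ × ℝ → ℂ) (z : ℝ × ℝ) : ℂ :=
  Complex.exp (Complex.I * (z.1 * z.2 / 2 - r * (c + r ^ 2 / 2) * z.1 : ℝ)) * w (r⁻¹ • z - (0, c))

section Tiling

variable {A : ℝ × ℝ → ℝ × ℝ} {w : ℝ × ℝ → ℂ} {a b r : ℝ}

lemma magDeriv_exp_mul {θ : ℝ × ℝ → ℝ} {u : ℝ × ℝ → ℂ} {x : ℝ × ℝ}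
    (hθ : DifferentiableAt ℝ θ x) (hu : DifferentiableAt ℝ u x) (e : ℝ × ℝ) :
    magDeriv A (fun y => Complex.exp (Complex.I * θ y) * u y) x e =
      Complex.exp (Complex.I * θ x) * (magDeriv A u x e + Complex.I * fderiv ℝ θ x e * u x) := by
  have hexp : HasFDerivAt (fun y => Complex.exp (Complex.I * θ y))
      (Complex.exp (Complex.I * θ x) • Complex.I • Complex.ofRealCLM.comp (fderiv ℝ θ x)) x :=
    ((Complex.ofRealCLM.hasFDerivAt.comp x hθ.hasFDerivAt).const_mul Complex.I).cexp
  rw [magDeriv, magDeriv, (hexp.fun_mul hu.hasFDerivAt).fderiv]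
  simp
  ring

lemma magDeriv_gaugedCopy (hr : 0 < r) (hw : Differentiable ℝ w) (c : ℝ) (z e : ℝ × ℝ) :
    magDeriv A₀ (gaugedCopy r c w) z e =
      Complex.exp (Complex.I * (z.1 * z.2 / 2 - r * (c + r ^ 2 / 2) * z.1 : ℝ)) *
        (r⁻¹ • magDeriv (tangentPotential (r ^ 2)) w (r⁻¹ • z - (0, c)) e) := by
  have hθ := ((hasFDerivAt_fst (𝕜 := ℝ) (p := z)).fun_mul (hasFDerivAt_snd (𝕜 := ℝ) (p := z))
    |>.fun_mul (hasFDerivAt_const (1 / 2 : ℝ) z)).fun_sub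
      ((hasFDerivAt_fst (𝕜 := ℝ) (p := z)).const_mul (r * (c + r ^ 2 / 2)))
  simp only [mul_one_div] at hθ
  have hcopy :
      fderiv ℝ (fun z => w (r⁻¹ • z - (0, c))) z = r⁻¹ • fderiv ℝ w (r⁻¹ • z - (0, c)) := by
    rw [fderiv_comp_smul (f := fun y => w (y - (0, c))), fderiv_comp_sub]
  unfold gaugedCopy
  rw [magDeriv_exp_mul hθ.differentiableAt (by fun_prop), hθ.fderiv, magDeriv, magDeriv, hcopy]
  congr 1
  have hr' : (r : ℂ) ≠ 0 := by exact_mod_cast hr.ne'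
  simp [A₀, tangentPotential]
  field_simp
  ring

lemma glDensity_gaugedCopy (hr : 0 < r) (hw : Differentiable ℝ w) (σ K κ c : ℝ) (z : ℝ × ℝ) :
    glDensity A₀ (r ^ 2 * σ) K κ (gaugedCopy r c w) z =
      glDensity (tangentPotential (r ^ 2)) σ K κ w (r⁻¹ • z - (0, c)) := by
  have hexp (t : ℝ) : ‖Complex.exp (Complex.I * t)‖ = 1 := by
    rw [mul_comm, Complex.norm_exp_ofReal_mul_I]
  simp only [glDensity, magGradSq_eq, magDeriv_gaugedCopy hr hw, gaugedCopy, norm_mul, hexp,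
    norm_smul, Real.norm_eq_abs, mul_pow, sq_abs]
  field_simp

lemma IsSlabFun.gaugedCopy (hr : 0 < r) (hw : IsSlabFun a b w) (c : ℝ) :
    IsSlabFun (r * (a + c)) (r * (b + c)) (gaugedCopy r c w) where
  contDiff := by
    have hθ : ContDiff ℝ 1 fun z : ℝ × ℝ => z.1 * z.2 / 2 - r * (c + r ^ 2 / 2) * z.1 := by fun_prop
    have hw' := hw.contDiff
    have hθ' : ContDiff ℝ 1 fun z : ℝ × ℝ =>
      ((z.1 * z.2 / 2 - r * (c + r ^ 2 / 2) * z.1 : ℝ) : ℂ) := Complex.ofRealCLM.contDiff.comp hθ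
    unfold _root_.gaugedCopy
    fun_prop
  eq_zero z hz := by
    have : w (r⁻¹ • z - (0, c)) = 0 := hw.eq_zero _ fun h => hz <| by
      have hdiv : r⁻¹ * z.2 = z.2 / r := by ring
      simp only [Prod.snd_sub, Prod.smul_snd, smul_eq_mul, hdiv, mem_Ioo, lt_sub_iff_add_lt,
        sub_lt_iff_lt_add, lt_div_iff₀' hr, div_lt_iff₀' hr] at h
      exact h
    simp [_root_.gaugedCopy, this]

/- The copies of `w`, supported in `s < x₂ < s + 1` with `s = r²`, fill `n` consecutive horizontal
layers of height `r` in the square of side `n r`. -/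
theorem eD_le_setIntegral_strip_tangentPotential {σ : ℝ} {n : ℕ} (hr : 0 < r) (hσ : 0 ≤ σ)
    (hn : 0 < n) (hw : IsSlabFun (r ^ 2) (r ^ 2 + 1) w) (hw₀ : ∀ x ∈ frontier (Strip n), w x = 0) :
    eD (r ^ 2 * σ) (n * r) ≤
      n * r ^ 2 * ∫ x in Strip n, glDensity (tangentPotential (r ^ 2)) σ 1 1 w x := by
  have hn' : (0 : ℝ) < n := by exact_mod_cast hn
  set c : ℕ → ℝ := fun k => k - n / 2 - r ^ 2 with hc
  set y : ℕ → ℝ := fun k => r * (k - n / 2) with hy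
  have hmono : Monotone y := fun i j hij => by simp only [hy]; gcongr
  have hcopy (k : ℕ) : IsSlabFun (y k) (y (k + 1)) (gaugedCopy r (c k) w) := by
    convert hw.gaugedCopy hr (c k) using 1 <;> simp only [hy, hc] <;> push_cast <;> ring
  have hsum : IsSlabFun (-(n * r) / 2) (n * r / 2)
      fun z => ∑ k ∈ Finset.range n, gaugedCopy r (c k) w z := by
    refine ⟨ContDiff.sum fun k _ => (hcopy k).contDiff, fun z hz => Finset.sum_eq_zero fun k hk =>
      (hcopy k).eq_zero z fun h => hz ⟨?_, ?_⟩⟩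
    · calc -(n * r) / 2 = y 0 := by simp [hy]; ring
        _ ≤ y k := hmono k.zero_le
        _ < z.2 := h.1
    · calc z.2 < y (k + 1) := h.2
        _ ≤ y n := hmono (Finset.mem_range.1 hk)
        _ = n * r / 2 := by simp only [hy]; ring
  have hsum₀ : ∀ z ∈ frontier (Strip (n * r)),
      ∑ k ∈ Finset.range n, gaugedCopy r (c k) w z = 0 := by
    intro z hz
    have : r⁻¹ * z.1 = -n / 2 ∨ r⁻¹ * z.1 = n / 2 := by
      rw [frontier_strip (by positivity)] at hz
      rcases hz.1 with h | h <;> rw [h]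
      exacts [.inl (by field_simp), .inr (by field_simp)]
    exact Finset.sum_eq_zero fun k _ => by
      rw [gaugedCopy, hw₀ _ (by simpa [frontier_strip hn'] using this), mul_zero]
  calc eD (r ^ 2 * σ) (n * r)
      ≤ ∫ z in Strip (n * r), glDensity A₀ (r ^ 2 * σ) 1 1
          (fun z => ∑ k ∈ Finset.range n, gaugedCopy r (c k) w z) z :=
        eD_le_of_isSlabFun (by positivity) (by positivity) hsum hsum₀
    _ = ∑ k ∈ Finset.range n, ∫ z in Strip (n * r),
          glDensity A₀ (r ^ 2 * σ) 1 1 (gaugedCopy r (c k) w) z := by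
        simp only [glDensity_sum_of_monotone hmono hcopy]
        exact integral_finsetSum _ fun k _ => (hcopy k).integrableOn_glDensity continuous_A₀ _ _ _ _
    _ = n * r ^ 2 * ∫ x in Strip n, glDensity (tangentPotential (r ^ 2)) σ 1 1 w x := by
        simp [glDensity_gaugedCopy hr hw.differentiable, mul_assoc,
          setIntegral_strip_comp_smul_sub hr _ _ (glDensity (tangentPotential (r ^ 2)) σ 1 1 w)]

end Tiling

/-! ### Energy bounds for slab functions in the field `x₂` -/

section SlabEnergy

variable {A A' : ℝ × ℝ → ℝ × ℝ} {v : ℝ × ℝ → ℂ} {a b s t K κ δ R : ℝ}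

lemma sub_le_norm_add_sq {F : Type*} [SeminormedAddCommGroup F] (hδ : 0 < δ) (y z : F) :
    (1 - δ) * ‖y‖ ^ 2 - δ⁻¹ * ‖z‖ ^ 2 ≤ ‖y + z‖ ^ 2 := by
  have htri : (‖y‖ - ‖z‖) ^ 2 ≤ ‖y + z‖ ^ 2 :=
    sq_le_sq.2 <| by simpa [abs_of_nonneg] using abs_norm_sub_norm_le y (-z)
  have hyoung : 0 ≤ (δ * ‖y‖ - ‖z‖) ^ 2 / δ := by positivity
  have hexpand : (δ * ‖y‖ - ‖z‖) ^ 2 / δ = δ * ‖y‖ ^ 2 - 2 * ‖y‖ * ‖z‖ + δ⁻¹ * ‖z‖ ^ 2 := by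
    field_simp
    ring
  nlinarith [sq_nonneg ‖z‖]

lemma magGradSq_comparison (hδ : 0 < δ) (A A' : ℝ × ℝ → ℝ × ℝ) (v : ℝ × ℝ → ℂ) (x : ℝ × ℝ) :
    (1 - δ) * magGradSq A' v x
      - δ⁻¹ * (((A' x).1 - (A x).1) ^ 2 + ((A' x).2 - (A x).2) ^ 2) * ‖v x‖ ^ 2
      ≤ magGradSq A v x := by
  have hnorm (τ : ℝ) : ‖Complex.I * τ * v x‖ ^ 2 = τ ^ 2 * ‖v x‖ ^ 2 := by simp [mul_pow]
  have h₁ : magDeriv A v x (1, 0) =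
      magDeriv A' v x (1, 0) + Complex.I * ((A' x).1 - (A x).1 : ℝ) * v x := by
    simp [magDeriv]; ring
  have h₂ : magDeriv A v x (0, 1) =
      magDeriv A' v x (0, 1) + Complex.I * ((A' x).2 - (A x).2 : ℝ) * v x := by
    simp [magDeriv]; ring
  have hle₁ := sub_le_norm_add_sq hδ (magDeriv A' v x (1, 0))
    (Complex.I * ((A' x).1 - (A x).1 : ℝ) * v x)
  have hle₂ := sub_le_norm_add_sq hδ (magDeriv A' v x (0, 1))
    (Complex.I * ((A' x).2 - (A x).2 : ℝ) * v x)
  rw [hnorm] at hle₁ hle₂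
  rw [magGradSq_eq A, magGradSq_eq A', h₁, h₂]
  linarith

lemma magGradSq_tangentPotential_le (hδ : 0 < δ) (v : ℝ × ℝ → ℂ) {x : ℝ × ℝ}
    (hx : x.2 ∈ Ioo s (s + 1)) :
    (1 - δ) * magGradSq (tangentPotential s) v x - 1 / (4 * δ) * ‖v x‖ ^ 2
      ≤ magGradSq Avan v x := by
  have hdist : ((tangentPotential s x).1 - (Avan x).1) ^ 2 +
      ((tangentPotential s x).2 - (Avan x).2) ^ 2 ≤ 1 / 4 := by
    have hfour : (x.2 - s) ^ 4 ≤ 1 :=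
      pow_le_one₀ (by linarith [hx.1]) (by linarith [hx.2])
    calc _ = (x.2 - s) ^ 4 / 4 := by simp [tangentPotential, Avan]; ring
      _ ≤ 1 / 4 := by gcongr
  refine le_trans (sub_le_sub_left ?_ _) (magGradSq_comparison hδ Avan (tangentPotential s) v x)
  calc _ ≤ δ⁻¹ * (1 / 4) * ‖v x‖ ^ 2 := by gcongr
    _ = 1 / (4 * δ) * ‖v x‖ ^ 2 := by field_simp

lemma mul_glDensity_smul (hK : 0 < K) (hκ : 0 < κ) (A : ℝ × ℝ → ℝ × ℝ) (t : ℝ) (v : ℝ × ℝ → ℂ)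
    (x : ℝ × ℝ) :
    K ^ 2 / κ * glDensity A (t / K) 1 1 (√(κ / K) • v) x = glDensity A t K κ v x := by
  have hsq : √(κ / K) ^ 2 = κ / K := Real.sq_sqrt (by positivity)
  have hfour : √(κ / K) ^ 4 = (κ / K) ^ 2 := by rw [pow_mul _ 2 2, hsq]
  simp only [glDensity, magGradSq_const_smul, Pi.smul_apply, norm_smul, mul_pow, norm_of_nonneg
    (Real.sqrt_nonneg _), hsq, hfour]
  field_simp

lemma neg_le_setIntegral_strip_glDensity (hA : Continuous A) (ht : 0 ≤ t) (K : ℝ) (hκ : 0 < κ)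
    (hR : 0 ≤ R) (hab : a ≤ b) (hv : IsSlabFun a b v) :
    -(K ^ 2 / (2 * κ)) * (R * (b - a)) ≤ ∫ x in Strip R, glDensity A t K κ v x := by
  set S : Set (ℝ × ℝ) := Ioo (-R / 2) (R / 2) ×ˢ Ioo a b
  have hS : S ⊆ Strip R := prod_mono_right (subset_univ _)
  have hvol : volume S = ENNReal.ofReal (R * (b - a)) := by
    rw [Measure.volume_eq_prod, Measure.prod_prod, Real.volume_Ioo, Real.volume_Ioo,
      ENNReal.ofReal_mul hR]
    ring_nf
  have hreal : volume.real S = R * (b - a) := by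
    rw [Measure.real, hvol, ENNReal.toReal_ofReal (mul_nonneg hR (sub_nonneg.2 hab))]
  rw [← hreal, setIntegral_eq_of_subset_of_forall_sdiff_eq_zero (measurableSet_strip R) hS
    fun x hx => hv.glDensity_eq_zero fun h => hx.2 ⟨hx.1.1, h⟩]
  exact setIntegral_ge_of_const_le_real (measurableSet_Ioo.prod measurableSet_Ioo)
    (hvol ▸ ENNReal.ofReal_ne_top) (fun x _ => neg_le_glDensity A ht K hκ v x)
    ((hv.integrableOn_glDensity hA t K κ R).mono_set hS)

lemma setIntegral_strip_glDensity_Avan_nonneg (hκ : 0 ≤ κ) (hKa : K ≤ a) (hR : 0 < R)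
    (hv : IsSlabFun a b v) (hv₀ : ∀ x ∈ frontier (Strip R), v x = 0) :
    0 ≤ ∫ x in Strip R, glDensity Avan 1 K κ v x := by
  have hvc := hv.contDiff.continuous
  have hmag : IntegrableOn (magGradSq Avan v) (Strip R) :=
    integrableOn_strip_of_continuous (continuous_magGradSq contDiff_Avan.continuous hv.contDiff)
      fun x hx => magGradSq_eq_zero (hv.eq_zero x hx) (hv.fderiv_eq_zero hx)
  have hcurl : IntegrableOn (fun x => curl Avan x * ‖v x‖ ^ 2) (Strip R) := by
    simp only [curl_Avan]
    exact integrableOn_strip_of_continuous (by fun_prop) fun x (hx : x.2 ∉ Ioo a b) => by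
      simp [hv.eq_zero x hx]
  calc 0 ≤ ∫ x in Strip R, (magGradSq Avan v x - curl Avan x * ‖v x‖ ^ 2) := by
        rw [integral_sub hmag hcurl, sub_nonneg]
        exact setIntegral_strip_curl_mul_norm_sq_le contDiff_Avan hR hv hv₀
    _ ≤ ∫ x in Strip R, glDensity Avan 1 K κ v x := by
        refine integral_mono (hmag.sub hcurl)
          (hv.integrableOn_glDensity contDiff_Avan.continuous 1 K κ R) fun x => ?_
        have hfield : K * ‖v x‖ ^ 2 ≤ x.2 * ‖v x‖ ^ 2 := by
          by_cases hx : x.2 ∈ Ioo a b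
          · exact mul_le_mul_of_nonneg_right (hKa.trans hx.1.le) (sq_nonneg _)
          · simp [hv.eq_zero x hx]
        have hquartic : 0 ≤ κ / 2 * ‖v x‖ ^ 4 := by positivity
        simp only [glDensity, curl_Avan, one_mul]
        linarith

/- In the slab the potential is replaced by its tangent, at the cost of a factor `1 - δ` and of
`1 / (4δ)` in the mass; rescaling the amplitude normalises the quartic term. -/
lemma eD_div_le_setIntegral_strip_glDensity_Avan (hK : 0 ≤ K) (hκ : 0 < κ) (hδ : 0 < δ)
    (hδ₁ : δ ≤ 1) (hs : 0 < s) {n : ℕ} (hn : 0 < n) (hv : IsSlabFun s (s + 1) v)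
    (hv₀ : ∀ x ∈ frontier (Strip n), v x = 0) :
    (K + 1 / (4 * δ)) ^ 2 / κ *
        (n * (eD (s * ((1 - δ) / (K + 1 / (4 * δ)))) (n * √s) / (n * √s) ^ 2))
      ≤ ∫ x in Strip n, glDensity Avan 1 K κ v x := by
  have hn' : (0 : ℝ) < n := by exact_mod_cast hn
  have hs' : √s ^ 2 = s := Real.sq_sqrt hs.le
  set K' := K + 1 / (4 * δ) with hK'
  have hK'₀ : 0 < K' := by positivity
  have hσ : 0 ≤ (1 - δ) / K' := div_nonneg (sub_nonneg.2 hδ₁) hK'₀.le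
  set w := √(κ / K') • v
  have hw : IsSlabFun s (s + 1) w := hv.const_smul _
  have htile := eD_le_setIntegral_strip_tangentPotential (σ := (1 - δ) / K') (w := w)
    (Real.sqrt_pos.2 hs) hσ hn (by rwa [hs']) fun x hx => by simp [w, hv₀ x hx]
  rw [hs'] at htile
  calc K' ^ 2 / κ * (n * (eD (s * ((1 - δ) / K')) (n * √s) / (n * √s) ^ 2))
      ≤ K' ^ 2 / κ * ∫ x in Strip n, glDensity (tangentPotential s) ((1 - δ) / K') 1 1 w x := by
        gcongr
        rw [mul_pow, hs', mul_div_assoc', div_le_iff₀ (by positivity)]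
        exact (mul_le_mul_of_nonneg_left htile hn'.le).trans_eq (by ring)
    _ = ∫ x in Strip n, glDensity (tangentPotential s) (1 - δ) K' κ v x := by
        rw [← integral_const_mul]
        simp only [w, mul_glDensity_smul hK'₀ hκ]
    _ ≤ ∫ x in Strip n, glDensity Avan 1 K κ v x := by
        refine integral_mono (hv.integrableOn_glDensity (continuous_tangentPotential s) _ _ _ _)
          (hv.integrableOn_glDensity contDiff_Avan.continuous _ _ _ _) fun x => ?_
        by_cases hx : x.2 ∈ Ioo s (s + 1)
        · have := magGradSq_tangentPotential_le hδ v hx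
          simp only [glDensity, hK']
          linarith
        · simp only [hv.glDensity_eq_zero hx, le_refl]

lemma magGradSq_Avan_comp_reflect (hv : Differentiable ℝ v) (x : ℝ × ℝ) :
    magGradSq Avan (fun y => v (y.1, -y.2)) x = magGradSq Avan v (x.1, -x.2) := by
  have hrefl : HasFDerivAt (fun y : ℝ × ℝ => (y.1, -y.2))
      ((ContinuousLinearMap.fst ℝ ℝ ℝ).prod (-ContinuousLinearMap.snd ℝ ℝ ℝ)) x :=
    hasFDerivAt_fst.prodMk hasFDerivAt_snd.neg
  have hcomp := ((hv _).hasFDerivAt.comp x hrefl).fderiv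
  have hneg : ((0, -1) : ℝ × ℝ) = -(0, 1) := by simp
  simp only [Function.comp_def] at hcomp
  simp [magGradSq, hcomp, Avan, hneg, -Prod.neg_mk]

lemma setIntegral_strip_glDensity_Avan_reflect (hv : Differentiable ℝ v) (K κ R : ℝ) :
    ∫ x in Strip R, glDensity Avan 1 K κ (fun y => v (y.1, -y.2)) x =
      ∫ x in Strip R, glDensity Avan 1 K κ v x := by
  rw [← setIntegral_strip_comp_reflect R (glDensity Avan 1 K κ v)]
  simp only [glDensity, magGradSq_Avan_comp_reflect hv]

end SlabEnergy

/-! ### Localization to slabs -/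

/-- A `C¹` cutoff with values in `[0, 1]`, vanishing outside `(0, 1)`. -/
structure IsSlabCutoff (χ : ℝ → ℝ) : Prop where
  contDiff : ContDiff ℝ 1 χ
  nonneg : ∀ y, 0 ≤ χ y
  le_one : ∀ y, χ y ≤ 1
  eq_zero : ∀ y ∉ Ioo (0 : ℝ) 1, χ y = 0

/-- The function `u` cut off to the slab `s < x₂ < s + 1` by the translate of `χ`. -/
def slabCut (χ : ℝ → ℝ) (s : ℝ) (u : ℝ × ℝ → ℂ) (x : ℝ × ℝ) : ℂ := χ (x.2 - s) • u x

/-- The strip energy of `u` localized to the slab `s < x₂ < s + 1`, as a function of `s`; the mass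
coefficient `K` exceeds the quartic coefficient `κ` so as to absorb the localization error. -/
def slabEnergy (χ : ℝ → ℝ) (K κ R : ℝ) (u : ℝ × ℝ → ℂ) (s : ℝ) : ℝ :=
  ∫ x in Strip R, glDensity Avan 1 K κ (slabCut χ s u) x

section Localization

variable {χ φ : ℝ → ℝ} {A : ℝ × ℝ → ℝ × ℝ} {u : ℝ × ℝ → ℂ} {f : ℝ × ℝ → ℝ}
  {μ : Measure (ℝ × ℝ)} {L R K κ : ℝ}

lemma integrable_inner_magDeriv (hA : Continuous A) (hu : ContDiff ℝ 1 u)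
    (hmag : Integrable (magGradSq A u) μ) (hsq : Integrable (fun x => ‖u x‖ ^ 2) μ) :
    Integrable (fun x => inner ℝ (magDeriv A u x (0, 1)) (u x)) μ := by
  have := hu.continuous_fderiv one_ne_zero
  have huc := hu.continuous
  refine (hmag.add hsq).mono' (Continuous.aestronglyMeasurable (by unfold magDeriv; fun_prop))
    (.of_forall fun x => (norm_inner_le_norm _ _).trans ?_)
  simp only [Pi.add_apply, magGradSq_eq]
  nlinarith [sq_nonneg (‖magDeriv A u x (0, 1)‖ - ‖u x‖), sq_nonneg ‖magDeriv A u x (1, 0)‖,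
    sq_nonneg ‖magDeriv A u x (0, 1)‖, sq_nonneg ‖u x‖]

variable [SFinite μ]

lemma integrable_of_continuous_of_eq_zero (hφ : Continuous φ) (hφ₀ : ∀ y ∉ Ioo (0 : ℝ) 1, φ y = 0) :
    Integrable φ :=
  hφ.integrable_of_hasCompactSupport <| HasCompactSupport.intro isCompact_Icc fun y hy =>
    hφ₀ y fun h => hy (Ioo_subset_Icc_self h)

lemma integrable_shift_mul (hφc : Continuous φ) (hφ : Integrable φ) (hf : Integrable f μ) :
    Integrable (fun z : ℝ × ℝ × ℝ => φ (z.2.2 - z.1) * f z.2) (volume.prod μ) := by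
  have hmeas : AEStronglyMeasurable (fun z : ℝ × ℝ × ℝ => φ (z.2.2 - z.1) * f z.2)
      (volume.prod μ) :=
    (Continuous.aestronglyMeasurable (by fun_prop)).mul hf.aestronglyMeasurable.comp_snd
  refine (integrable_prod_iff' hmeas).2
    ⟨.of_forall fun x => (hφ.comp_sub_left x.2).mul_const (f x), ?_⟩
  simp_rw [norm_mul, integral_mul_const, integral_sub_left_eq_self (fun y => ‖φ y‖)]
  exact hf.norm.const_mul _

lemma integral_shift_mul (hφc : Continuous φ) (hφ : Integrable φ) (hf : Integrable f μ) :
    ∫ z : ℝ × ℝ × ℝ, φ (z.2.2 - z.1) * f z.2 ∂(volume.prod μ) = (∫ y, φ y) * ∫ x, f x ∂μ := by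
  rw [integral_prod_symm _ (integrable_shift_mul hφc hφ hf)]
  simp_rw [integral_mul_const, integral_sub_left_eq_self φ, integral_const_mul]

namespace IsSlabCutoff

lemma deriv_eq_zero (hχ : IsSlabCutoff χ) : ∀ y ∉ Ioo (0 : ℝ) 1, deriv χ y = 0 := fun y hy =>
  IsLocalMin.deriv_eq_zero <| .of_forall fun z => (hχ.eq_zero y hy).trans_le (hχ.nonneg z)

lemma continuous_deriv (hχ : IsSlabCutoff χ) : Continuous (deriv χ) :=
  hχ.contDiff.continuous_deriv le_rfl

lemma integral_mul_deriv_eq_zero (hχ : IsSlabCutoff χ) : ∫ y, 2 * χ y * deriv χ y = 0 := by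
  have hc := hχ.contDiff.continuous
  have hd := hχ.continuous_deriv
  refine integral_eq_zero_of_hasDerivAt_of_integrable (f := fun y => χ y ^ 2) (fun y => ?_)
    (integrable_of_continuous_of_eq_zero (by fun_prop) fun y hy => by simp [hχ.eq_zero y hy])
    (integrable_of_continuous_of_eq_zero (by fun_prop) fun y hy => by simp [hχ.eq_zero y hy])
  simpa using (hχ.contDiff.differentiable one_ne_zero y).hasDerivAt.fun_pow 2

lemma isSlabFun_slabCut (hχ : IsSlabCutoff χ) (hu : ContDiff ℝ 1 u) (s : ℝ) :
    IsSlabFun s (s + 1) (slabCut χ s u) where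
  contDiff := (hχ.contDiff.comp (contDiff_snd.sub contDiff_const)).smul hu
  eq_zero x hx := by
    rw [slabCut, hχ.eq_zero _ fun h => hx ⟨by linarith [h.1], by linarith [h.2]⟩, zero_smul]

lemma glDensity_slabCut (hχ : IsSlabCutoff χ) (hu : Differentiable ℝ u) (K κ s : ℝ) (x : ℝ × ℝ) :
    glDensity A 1 K κ (slabCut χ s u) x =
      χ (x.2 - s) ^ 2 * glDensity A 1 K κ u x
      + 2 * χ (x.2 - s) * deriv χ (x.2 - s) * inner ℝ (magDeriv A u x (0, 1)) (u x)
      + deriv χ (x.2 - s) ^ 2 * ‖u x‖ ^ 2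
      - (χ (x.2 - s) ^ 2 - χ (x.2 - s) ^ 4) * (κ / 2 * ‖u x‖ ^ 4) := by
  have hcut : HasFDerivAt (fun y : ℝ × ℝ => χ (y.2 - s))
      (deriv χ (x.2 - s) • ContinuousLinearMap.snd ℝ ℝ ℝ) x :=
    (hχ.contDiff.differentiable one_ne_zero _).hasDerivAt.comp_hasFDerivAt x
      (hasFDerivAt_snd.sub_const s)
  have hD (e : ℝ × ℝ) : magDeriv A (slabCut χ s u) x e =
      χ (x.2 - s) • magDeriv A u x e + (deriv χ (x.2 - s) * e.2) • u x := by
    unfold slabCut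
    rw [magDeriv_smul hcut.differentiableAt (hu x), hcut.fderiv]
    simp
  simp only [glDensity, magGradSq_eq, hD, norm_add_sq_real, real_inner_smul_left,
    real_inner_smul_right, slabCut, norm_smul, mul_pow, Real.norm_eq_abs, sq_abs,
    Even.pow_abs (show Even 4 by decide)]
  ring

end IsSlabCutoff

/- Integrating over all slabs kills the cross term, since `2 χ χ' = (χ²)'`. -/
theorem integral_glDensity_slabCut_le (hχ : IsSlabCutoff χ) (hA : Continuous A)
    (hu : ContDiff ℝ 1 u) (hmag : Integrable (magGradSq A u) μ)
    (hsq : Integrable (fun x => ‖u x‖ ^ 2) μ) (hfour : Integrable (fun x => ‖u x‖ ^ 4) μ)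
    (K : ℝ) (hκ : 0 ≤ κ) :
    Integrable (fun s => ∫ x, glDensity A 1 K κ (slabCut χ s u) x ∂μ) ∧
    ∫ s, ∫ x, glDensity A 1 K κ (slabCut χ s u) x ∂μ ≤
      (∫ y, χ y ^ 2) * ∫ x, glDensity A 1 K κ u x ∂μ +
        (∫ y, deriv χ y ^ 2) * ∫ x, ‖u x‖ ^ 2 ∂μ := by
  have hc := hχ.contDiff.continuous
  have hd := hχ.continuous_deriv
  have hχ₀ := hχ.eq_zero
  have hint {φ : ℝ → ℝ} (hφ : Continuous φ) (hφ₀ : ∀ y ∉ Ioo (0 : ℝ) 1, φ y = 0) {f : ℝ × ℝ → ℝ}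
      (hf : Integrable f μ) : Integrable (fun z : ℝ × ℝ × ℝ => φ (z.2.2 - z.1) * f z.2)
        (volume.prod μ) ∧ ∫ z : ℝ × ℝ × ℝ, φ (z.2.2 - z.1) * f z.2 ∂(volume.prod μ) =
          (∫ y, φ y) * ∫ x, f x ∂μ :=
    have hφi := integrable_of_continuous_of_eq_zero hφ hφ₀
    ⟨integrable_shift_mul hφ hφi hf, integral_shift_mul hφ hφi hf⟩
  have hgl : Integrable (glDensity A 1 K κ u) μ :=
    ((hmag.const_mul 1).sub (hsq.const_mul K)).add (hfour.const_mul (κ / 2))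
  obtain ⟨hi₁, he₁⟩ := hint (φ := fun y => χ y ^ 2) (by fun_prop)
    (fun y hy => by simp [hχ₀ y hy]) hgl
  obtain ⟨hi₂, he₂⟩ := hint (φ := fun y => 2 * χ y * deriv χ y) (by fun_prop)
    (fun y hy => by simp [hχ₀ y hy]) (integrable_inner_magDeriv hA hu hmag hsq)
  obtain ⟨hi₃, he₃⟩ := hint (φ := fun y => deriv χ y ^ 2) (by fun_prop)
    (fun y hy => by simp [hχ.deriv_eq_zero y hy]) hsq
  obtain ⟨hi₄, he₄⟩ := hint (φ := fun y => χ y ^ 2 - χ y ^ 4) (by fun_prop)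
    (fun y hy => by simp [hχ₀ y hy]) (hfour.const_mul (κ / 2))
  have hi := ((hi₁.add hi₂).add hi₃).sub hi₄
  have heq := integral_prod _ hi
  rw [integral_sub' ((hi₁.add hi₂).add hi₃) hi₄, integral_add' (hi₁.add hi₂) hi₃,
    integral_add' hi₁ hi₂, he₁, he₂, he₃, he₄, hχ.integral_mul_deriv_eq_zero] at heq
  have hquartic : 0 ≤ (∫ y, (χ y ^ 2 - χ y ^ 4)) * ∫ x, κ / 2 * ‖u x‖ ^ 4 ∂μ :=
    mul_nonneg (integral_nonneg fun y => sub_nonneg.2 <|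
      pow_le_pow_of_le_one (hχ.nonneg y) (hχ.le_one y) (by norm_num))
      (integral_nonneg fun x => by positivity)
  simp_rw [hχ.glDensity_slabCut (hu.differentiable one_ne_zero)]
  exact ⟨hi.integral_prod_left, heq.symm.trans_le (by linarith)⟩

lemma Estrip_eq_integral_glDensity (L R : ℝ) (u : ℝ × ℝ → ℂ) : Estrip L R u =
    ∫ x in Strip R, glDensity Avan 1 (L ^ (-(2 : ℝ) / 3)) (L ^ (-(2 : ℝ) / 3)) u x := by
  simp only [Estrip, stripDensity, glDensity, one_mul]

lemma integral_slabEnergy_le (hχ : IsSlabCutoff χ) (hL : 0 ≤ L)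
    (hu : MemH1mag0 R u)
    (hK : ∫ y, deriv χ y ^ 2 ≤ (K - L ^ (-(2 : ℝ) / 3)) * ∫ y, χ y ^ 2) :
    Integrable (slabEnergy χ K (L ^ (-(2 : ℝ) / 3)) R u) ∧
    ∫ s, slabEnergy χ K (L ^ (-(2 : ℝ) / 3)) R u s ≤ (∫ y, χ y ^ 2) * Estrip L R u := by
  obtain ⟨hu₁, hsq, hmag, hfour, -⟩ := hu
  set κ := L ^ (-(2 : ℝ) / 3)
  have hκ : 0 ≤ κ := Real.rpow_nonneg hL _
  obtain ⟨hi, hle⟩ :=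
    integral_glDensity_slabCut_le hχ contDiff_Avan.continuous hu₁ hmag hsq hfour K hκ
  have hgl : IntegrableOn (glDensity Avan 1 K κ u) (Strip R) :=
    ((hmag.const_mul 1).sub (hsq.const_mul K)).add (hfour.const_mul (κ / 2))
  refine ⟨hi, hle.trans ?_⟩
  have hshift : Estrip L R u =
      (∫ x in Strip R, glDensity Avan 1 K κ u x) + (K - κ) * ∫ x in Strip R, ‖u x‖ ^ 2 := by
    rw [Estrip_eq_integral_glDensity, ← integral_const_mul, ← integral_add hgl (hsq.const_mul _)]
    congr with x
    simp only [glDensity, κ]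
    ring
  have hmass := mul_le_mul_of_nonneg_right hK
    (integral_nonneg fun x => sq_nonneg ‖u x‖ : 0 ≤ ∫ x in Strip R, ‖u x‖ ^ 2)
  rw [hshift]
  linarith

end Localization

/-! ### A cutoff with steep sides -/

/-- The cutoff that rises from `0` to `1` on `[0, q]` and falls back to `0` on `[1 - q, 1]`. -/
def steepCutoff (q y : ℝ) : ℝ := smoothTransition (y / q) * smoothTransition ((1 - y) / q)

/-- The Dirichlet energy `∫ θ'²` of the smooth step `θ`, governing the localization error. -/
def transitionEnergy : ℝ := ∫ y, deriv smoothTransition y ^ 2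

section SteepCutoff

variable {q y : ℝ}

lemma deriv_smoothTransition_eq_zero (hy : y ∉ Ioo (0 : ℝ) 1) : deriv smoothTransition y = 0 := by
  rcases le_or_gt y 0 with h | h
  · exact IsLocalMin.deriv_eq_zero <| .of_forall fun z =>
      (smoothTransition.zero_of_nonpos h).trans_le (smoothTransition.nonneg z)
  · have hy₁ : 1 ≤ y := not_lt.1 fun h₁ => hy ⟨h, h₁⟩
    exact IsLocalMax.deriv_eq_zero <| .of_forall fun z =>
      (smoothTransition.le_one z).trans_eq (smoothTransition.one_of_one_le hy₁).symm

lemma isSlabCutoff_steepCutoff (hq : 0 < q) : IsSlabCutoff (steepCutoff q) where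
  contDiff := by
    have : ContDiff ℝ 1 smoothTransition := smoothTransition.contDiff
    unfold steepCutoff
    fun_prop
  nonneg y := mul_nonneg (smoothTransition.nonneg _) (smoothTransition.nonneg _)
  le_one y := mul_le_one₀ (smoothTransition.le_one _) (smoothTransition.nonneg _)
    (smoothTransition.le_one _)
  eq_zero y hy := by
    rcases le_or_gt y 0 with h | h
    · rw [steepCutoff, smoothTransition.zero_of_nonpos (div_nonpos_of_nonpos_of_nonneg h hq.le),
        zero_mul]
    · have hy₁ : 1 - y ≤ 0 := sub_nonpos.2 (not_lt.1 fun h₁ => hy ⟨h, h₁⟩)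
      rw [steepCutoff, smoothTransition.zero_of_nonpos (div_nonpos_of_nonpos_of_nonneg hy₁ hq.le),
        mul_zero]

lemma steepCutoff_eq_one (hq : 0 < q) (hy : y ∈ Icc q (1 - q)) : steepCutoff q y = 1 := by
  rw [steepCutoff, smoothTransition.one_of_one_le ((one_le_div hq).2 hy.1),
    smoothTransition.one_of_one_le ((one_le_div hq).2 (le_sub_comm.1 hy.2)), mul_one]

lemma one_sub_two_mul_le_integral_steepCutoff_sq (hq : 0 < q) :
    1 - 2 * q ≤ ∫ y, steepCutoff q y ^ 2 := by
  have hχ := isSlabCutoff_steepCutoff hq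
  calc 1 - 2 * q ≤ volume.real (Icc q (1 - q)) := by
        rw [volume_real_Icc]
        exact (by linarith : 1 - 2 * q ≤ 1 - q - q).trans (le_max_left _ _)
    _ = ∫ y in Icc q (1 - q), steepCutoff q y ^ 2 := by
        rw [setIntegral_congr_fun (g := fun _ => (1 : ℝ)) measurableSet_Icc fun y hy => by
          simp [steepCutoff_eq_one hq hy]]
        simp
    _ ≤ ∫ y, steepCutoff q y ^ 2 := setIntegral_le_integral
        (integrable_of_continuous_of_eq_zero (hχ.contDiff.continuous.pow 2) fun y hy => by
          simp [hχ.eq_zero y hy]) (.of_forall fun y => sq_nonneg _)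

lemma deriv_steepCutoff_sq_le (q y : ℝ) : deriv (steepCutoff q) y ^ 2 ≤ 2 / q ^ 2 *
    (deriv smoothTransition (y / q) ^ 2 + deriv smoothTransition ((1 - y) / q) ^ 2) := by
  have hS (z : ℝ) : HasDerivAt smoothTransition (deriv smoothTransition z) z :=
    ((smoothTransition.contDiff (n := 1)).differentiable one_ne_zero z).hasDerivAt
  have hderiv := ((hS (y / q)).comp y ((hasDerivAt_id y).div_const q)).mul
    ((hS ((1 - y) / q)).comp y (((hasDerivAt_id y).const_sub 1).div_const q))
  have hsq (z : ℝ) : smoothTransition z ^ 2 ≤ 1 :=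
    pow_le_one₀ (smoothTransition.nonneg z) (smoothTransition.le_one z)
  set a := deriv smoothTransition (y / q)
  set b := deriv smoothTransition ((1 - y) / q)
  calc deriv (steepCutoff q) y ^ 2
      = 1 / q ^ 2 * (a * smoothTransition ((1 - y) / q) - smoothTransition (y / q) * b) ^ 2 := by
        rw [show deriv (steepCutoff q) y = _ from hderiv.deriv]
        simp only [Function.comp_apply, id_eq]
        ring
    _ ≤ 1 / q ^ 2 * (2 * (a ^ 2 * smoothTransition ((1 - y) / q) ^ 2 +
          smoothTransition (y / q) ^ 2 * b ^ 2)) := by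
        gcongr
        linarith [sq_nonneg (a * smoothTransition ((1 - y) / q) + smoothTransition (y / q) * b)]
    _ ≤ 1 / q ^ 2 * (2 * (a ^ 2 * 1 + 1 * b ^ 2)) := by gcongr <;> exact hsq _
    _ = 2 / q ^ 2 * (a ^ 2 + b ^ 2) := by ring

lemma integral_deriv_steepCutoff_sq_le (hq : 0 < q) :
    ∫ y, deriv (steepCutoff q) y ^ 2 ≤ 4 * transitionEnergy / q := by
  have hχ := isSlabCutoff_steepCutoff hq
  have hS : Integrable fun y => deriv smoothTransition y ^ 2 :=
    integrable_of_continuous_of_eq_zero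
      (((smoothTransition.contDiff (n := 1)).continuous_deriv le_rfl).pow 2) fun y hy => by
      simp [deriv_smoothTransition_eq_zero hy]
  have hdiv := hS.comp_div hq.ne'
  have hint := integral_mono (integrable_of_continuous_of_eq_zero (hχ.continuous_deriv.pow 2)
    fun y hy => by simp [hχ.deriv_eq_zero y hy])
    ((hdiv.add (hdiv.comp_sub_left 1)).const_mul (2 / q ^ 2)) (deriv_steepCutoff_sq_le q)
  rw [integral_const_mul, integral_add' hdiv (hdiv.comp_sub_left 1),
    integral_sub_left_eq_self (fun y => deriv smoothTransition (y / q) ^ 2),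
    Measure.integral_comp_div (fun y => deriv smoothTransition y ^ 2), abs_of_pos hq,
    smul_eq_mul] at hint
  exact hint.trans_eq (by rw [transitionEnergy]; field_simp; ring)

lemma transitionEnergy_nonneg : 0 ≤ transitionEnergy := integral_nonneg fun _ => sq_nonneg _

end SteepCutoff

/-! ### Passage to the limit -/

section RealLine

variable {α : Type*} [MeasurableSpace α] {μ : Measure α} {f : ℝ → ℝ} {G : α → ℝ}
  {h τ : ℕ → α → ℝ} {a b c : ℝ}

lemma intervalIntegral_add_reflect_le (hf : Integrable f) (ha : 0 ≤ a)
    (hout : ∀ s ∉ Ioc (-1 - a) a, 0 ≤ f s) (hmid : ∀ s, -c ≤ f s) :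
    ∫ s in (0 : ℝ)..a, (f s + f (-1 - s)) ≤ (∫ s, f s) + c := by
  have hi {x y : ℝ} : IntervalIntegrable f volume x y := hf.intervalIntegrable
  have hrefl : ∫ s in (0 : ℝ)..a, f (-1 - s) = ∫ s in (-1 - a)..(-1), f s := by
    rw [intervalIntegral.integral_comp_sub_left f, sub_zero]
  have hcenter : -c ≤ ∫ s in (-1 : ℝ)..0, f s := by
    simpa using intervalIntegral.integral_mono_on (by norm_num : (-1 : ℝ) ≤ 0)
      intervalIntegrable_const hi fun s _ => hmid s
  have houter : ∫ s in (-1 - a)..a, f s ≤ ∫ s, f s := by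
    rw [intervalIntegral.integral_of_le (by linarith), ← integral_add_compl measurableSet_Ioc hf]
    exact le_add_of_nonneg_right (setIntegral_nonneg measurableSet_Ioc.compl hout)
  rw [intervalIntegral.integral_add hi (hf.comp_sub_left (-1)).intervalIntegrable, hrefl]
  rw [← intervalIntegral.integral_add_adjacent_intervals (b := -1) hi hi,
    ← intervalIntegral.integral_add_adjacent_intervals (a := -1) (b := 0) hi hi] at houter
  linarith

/- A Fatou lemma in which the lower bounds `h n` need not be measurable. -/
lemma integral_le_of_tendsto_of_le [IsFiniteMeasure μ] {A : ℕ → ℝ} (hG : Integrable G μ)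
    (hτ : ∀ n, Integrable (τ n) μ) (hbdd : ∀ n, ∀ᵐ x ∂μ, -c ≤ h n x)
    (hle : ∀ n, ∀ᵐ x ∂μ, h n x ≤ τ n x) (hlim : ∀ᵐ x ∂μ, Tendsto (h · x) atTop (𝓝 (G x)))
    (hτA : ∀ n, ∫ x, τ n x ∂μ ≤ A n) (hA : Tendsto A atTop (𝓝 a)) : ∫ x, G x ∂μ ≤ a := by
  have hmin : Tendsto (fun n => ∫ x, min (τ n x) (G x) ∂μ) atTop (𝓝 (∫ x, G x ∂μ)) := by
    refine tendsto_integral_of_dominated_convergence (fun x => |c| + |G x|)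
      (fun n => ((hτ n).inf hG).aestronglyMeasurable) ((integrable_const _).add hG.abs)
      (fun n => ?_) ?_
    · filter_upwards [hbdd n, hle n] with x hbdd hle
      rw [Real.norm_eq_abs, abs_le]
      refine ⟨le_min ?_ ?_, (min_le_right _ _).trans ?_⟩ <;>
        linarith [neg_abs_le (G x), le_abs_self (G x), le_abs_self c, abs_nonneg c,
          abs_nonneg (G x)]
    · filter_upwards [ae_all_iff.2 hle, hlim] with x hle hlim
      have hlow : Tendsto (fun n => min (h n x) (G x)) atTop (𝓝 (G x)) := by
        simpa using hlim.min (tendsto_const_nhds (x := G x))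
      exact hlow.squeeze tendsto_const_nhds (fun n => min_le_min_right _ (hle n))
        fun n => min_le_right _ _
  exact le_of_tendsto_of_tendsto' hmin hA fun n =>
    (integral_mono ((hτ n).inf hG) (hτ n) fun x => min_le_left _ _).trans (hτA n)

lemma setIntegral_Ioc_comp_mul_right (f : ℝ → ℝ) {σ : ℝ} (hσ : 0 < σ) :
    ∫ s in Ioc 0 σ⁻¹, f (s * σ) = σ⁻¹ * ∫ b in (0 : ℝ)..1, f b := by
  rw [← intervalIntegral.integral_of_le (inv_nonneg.2 hσ.le),
    intervalIntegral.integral_comp_mul_right f hσ.ne', zero_mul,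
    inv_mul_cancel₀ hσ.ne', smul_eq_mul]

end RealLine

namespace IsLimitG

variable {g : ℝ → ℝ} {σ c : ℝ}

lemma integrableOn_comp_mul_right (hg : IsLimitG g) (hσ : 0 < σ) (c : ℝ) :
    IntegrableOn (fun s => g (s * σ)) (Ioc 0 c) := by
  have hmeas : AEMeasurable (fun s => g (s * σ)) (volume.restrict (Ioc 0 c)) :=
    aemeasurable_restrict_of_monotoneOn measurableSet_Ioc fun s hs t ht hst =>
      hg.monotoneOn (mul_pos hs.1 hσ) (mul_pos ht.1 hσ) (mul_le_mul_of_nonneg_right hst hσ.le)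
  exact Integrable.of_bound hmeas.aestronglyMeasurable (1 / 2) <|
    (ae_restrict_mem measurableSet_Ioc).mono fun s hs => hg.norm_le_half (mul_pos hs.1 hσ)

lemma tendsto_natCast_succ_mul {b : ℝ} (hg : IsLimitG g) (hb : 0 < b) (hc : 0 < c) :
    Tendsto (fun n : ℕ => eD b (↑(n + 1) * c) / (↑(n + 1) * c) ^ 2) atTop (𝓝 (g b)) :=
  (hg b hb).comp <| (tendsto_natCast_atTop_atTop.comp (tendsto_add_atTop_nat 1)).atTop_mul_const hc

lemma neg_half_le_integral (hg : IsLimitG g) : -(1 / 2) ≤ ∫ b in (0 : ℝ)..1, g b := by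
  have hbound := intervalIntegral.norm_integral_le_of_norm_le_const (a := 0) (b := 1) (f := g)
    fun b hb => hg.norm_le_half (by rw [uIoc_of_le zero_le_one] at hb; exact hb.1)
  simpa using (abs_le.1 hbound).1

lemma integral_nonpos (hg : IsLimitG g) : ∫ b in (0 : ℝ)..1, g b ≤ 0 := by
  rw [intervalIntegral.integral_of_le zero_le_one]
  exact setIntegral_nonpos measurableSet_Ioc fun b hb => hg.nonpos hb.1

end IsLimitG

section StripLimit

variable {χ g E : ℝ → ℝ} {u : ℝ × ℝ → ℂ} {K κ δ L R s a : ℝ}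

lemma slabCut_eq_zero (hu₀ : ∀ x ∈ frontier (Strip R), u x = 0) (s : ℝ) :
    ∀ x ∈ frontier (Strip R), slabCut χ s u x = 0 := fun x hx => by simp [slabCut, hu₀ x hx]

lemma neg_le_slabEnergy (hχ : IsSlabCutoff χ) (hκ : 0 < κ) (hR : 0 ≤ R) (hu : ContDiff ℝ 1 u)
    (s : ℝ) : -(K ^ 2 / (2 * κ) * R) ≤ slabEnergy χ K κ R u s := by
  have := neg_le_setIntegral_strip_glDensity contDiff_Avan.continuous zero_le_one K hκ hR
    (by linarith) (hχ.isSlabFun_slabCut hu s)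
  simpa [slabEnergy] using this

/- `A_van` is even in `x₂`, so reflection moves slabs of the lower half-plane to the upper one. -/
lemma exists_isSlabFun_integral_eq_slabEnergy (hχ : IsSlabCutoff χ) (hR : 0 < R)
    (hu : MemH1mag0 R u) (s : ℝ) :
    ∃ v : ℝ × ℝ → ℂ, IsSlabFun s (s + 1) v ∧ (∀ x ∈ frontier (Strip R), v x = 0) ∧
      ∫ x in Strip R, glDensity Avan 1 K κ v x = slabEnergy χ K κ R u (-1 - s) := by
  have hcut := hχ.isSlabFun_slabCut hu.1 (-1 - s)
  refine ⟨fun x => slabCut χ (-1 - s) u (x.1, -x.2), ?_, fun x hx => ?_,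
    setIntegral_strip_glDensity_Avan_reflect hcut.differentiable K κ R⟩
  · convert hcut.reflect using 1 <;> ring
  · refine slabCut_eq_zero hu.2.2.2.2 _ _ ?_
    rw [frontier_strip hR] at hx ⊢
    exact ⟨hx.1, trivial⟩

lemma slabEnergy_nonneg (hχ : IsSlabCutoff χ) (hκ : 0 ≤ κ) (hR : 0 < R) (hu : MemH1mag0 R u)
    (hKa : K ≤ a) (hs : s ∉ Ioc (-1 - a) a) : 0 ≤ slabEnergy χ K κ R u s := by
  rcases lt_or_ge a s with has | has
  · exact setIntegral_strip_glDensity_Avan_nonneg hκ (hKa.trans has.le) hR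
      (hχ.isSlabFun_slabCut hu.1 s) (slabCut_eq_zero hu.2.2.2.2 s)
  · obtain ⟨v, hv, hv₀, hvs⟩ :=
      exists_isSlabFun_integral_eq_slabEnergy (K := K) (κ := κ) hχ hR hu (-1 - s)
    rw [sub_sub_cancel] at hvs
    refine hvs ▸ setIntegral_strip_glDensity_Avan_nonneg hκ ?_ hR hv hv₀
    linarith [not_lt.1 fun h => hs ⟨h, has⟩]

lemma eD_div_le_slabEnergy_add_reflect (hχ : IsSlabCutoff χ) (hK : 0 ≤ K) (hκ : 0 < κ)
    (hδ : 0 < δ) (hδ₁ : δ ≤ 1) (hs : 0 < s) {n : ℕ} (hn : 0 < n) (hu : MemH1mag0 n u) :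
    2 * ((K + 1 / (4 * δ)) ^ 2 / κ) *
        (eD (s * ((1 - δ) / (K + 1 / (4 * δ)))) (n * √s) / (n * √s) ^ 2) ≤
      (slabEnergy χ K κ n u s + slabEnergy χ K κ n u (-1 - s)) / n := by
  have hn' : (0 : ℝ) < n := by exact_mod_cast hn
  obtain ⟨v, hv, hv₀, hvs⟩ :=
    exists_isSlabFun_integral_eq_slabEnergy (K := K) (κ := κ) hχ hn' hu s
  have hlower := eD_div_le_setIntegral_strip_glDensity_Avan hK hκ hδ hδ₁ hs hn hv hv₀
  have hupper := eD_div_le_setIntegral_strip_glDensity_Avan hK hκ hδ hδ₁ hs hn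
    (hχ.isSlabFun_slabCut hu.1 s) (slabCut_eq_zero hu.2.2.2.2 s)
  rw [le_div_iff₀ hn', ← hvs]
  exact le_trans (by linarith) (add_le_add hupper hlower)

lemma integral_slabEnergy_add_reflect_le (hχ : IsSlabCutoff χ) (hL : 0 < L) (hR : 0 < R)
    (hu : MemH1mag0 R u) (ha : 0 ≤ a) (hKa : K ≤ a)
    (hcut : ∫ y, deriv χ y ^ 2 ≤ (K - L ^ (-(2 : ℝ) / 3)) * ∫ y, χ y ^ 2) :
    ∫ s in (0 : ℝ)..a, (slabEnergy χ K (L ^ (-(2 : ℝ) / 3)) R u s +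
        slabEnergy χ K (L ^ (-(2 : ℝ) / 3)) R u (-1 - s)) ≤
      (∫ y, χ y ^ 2) * Estrip L R u + K ^ 2 / (2 * L ^ (-(2 : ℝ) / 3)) * R := by
  have hκ : 0 < L ^ (-(2 : ℝ) / 3) := Real.rpow_pos_of_pos hL _
  obtain ⟨hi, hle⟩ := integral_slabEnergy_le hχ hL.le hu hcut
  exact (intervalIntegral_add_reflect_le hi ha
    (fun s hs => slabEnergy_nonneg hχ hκ.le hR hu hKa hs)
    fun s => neg_le_slabEnergy hχ hκ hR.le hu.1 s).trans (by gcongr)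

lemma exists_Estrip_lt_egs_add_one (L R : ℝ) : ∃ u, MemH1mag0 R u ∧ Estrip L R u < egs L R + 1 := by
  have hzero : MemH1mag0 R fun _ => 0 :=
    ⟨contDiff_const, by simp, by simp +unfoldPartialApp [magGradSq], by simp, fun _ _ => rfl⟩
  have hne : (Estrip L R '' {u | MemH1mag0 R u}).Nonempty := ⟨_, _, hzero, rfl⟩
  obtain ⟨_, ⟨u, hu, rfl⟩, hlt⟩ := Real.lt_sInf_add_pos hne one_pos
  exact ⟨u, hu, hlt⟩

lemma exists_setIntegral_slabEnergy_div_le (hχ : IsSlabCutoff χ) (hL : 0 < L) (hR : 0 < R)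
    (ha : 0 ≤ a) (hKa : K ≤ a)
    (hcut : ∫ y, deriv χ y ^ 2 ≤ (K - L ^ (-(2 : ℝ) / 3)) * ∫ y, χ y ^ 2) :
    ∃ u, MemH1mag0 R u ∧ Integrable (slabEnergy χ K (L ^ (-(2 : ℝ) / 3)) R u) ∧
      ∫ s in Ioc 0 a, (slabEnergy χ K (L ^ (-(2 : ℝ) / 3)) R u s +
          slabEnergy χ K (L ^ (-(2 : ℝ) / 3)) R u (-1 - s)) / R ≤
        (∫ y, χ y ^ 2) * ((egs L R + 1) / R) + K ^ 2 / (2 * L ^ (-(2 : ℝ) / 3)) := by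
  obtain ⟨u, hu, hlt⟩ := exists_Estrip_lt_egs_add_one L R
  refine ⟨u, hu, (integral_slabEnergy_le hχ hL.le hu hcut).1, ?_⟩
  have : 0 ≤ ∫ y, χ y ^ 2 := integral_nonneg fun y => sq_nonneg _
  rw [integral_div, ← intervalIntegral.integral_of_le ha, div_le_iff₀ hR, add_mul, mul_assoc,
    div_mul_cancel₀ _ hR.ne']
  exact (integral_slabEnergy_add_reflect_le hχ hL hR hu ha hKa hcut).trans (by gcongr)

lemma IsLimitE.tendsto_natCast_succ (hE : IsLimitE E) (hL : 0 < L) (m c : ℝ) :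
    Tendsto (fun n : ℕ => m * ((egs L ↑(n + 1) + 1) / ↑(n + 1)) + c) atTop (𝓝 (m * E L + c)) := by
  have hn : Tendsto (fun n : ℕ => ((n + 1 : ℕ) : ℝ)) atTop atTop :=
    tendsto_natCast_atTop_atTop.comp (tendsto_add_atTop_nat 1)
  have hdiv := ((hE L hL).comp hn).add (tendsto_inv_atTop_zero.comp hn)
  simpa [add_div, Function.comp_def] using (hdiv.const_mul m).add_const c

theorem mul_integral_le_of_isSlabCutoff (hg : IsLimitG g) (hE : IsLimitE E) (hχ : IsSlabCutoff χ)
    (hL : 0 < L) (hK : 0 ≤ K) (hδ : 0 < δ) (hδ₁ : δ < 1)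
    (hcut : ∫ y, deriv χ y ^ 2 ≤ (K - L ^ (-(2 : ℝ) / 3)) * ∫ y, χ y ^ 2) :
    2 * (K + 1 / (4 * δ)) ^ 3 / (L ^ (-(2 : ℝ) / 3) * (1 - δ)) * ∫ b in (0 : ℝ)..1, g b ≤
      (∫ y, χ y ^ 2) * E L + K ^ 2 / (2 * L ^ (-(2 : ℝ) / 3)) := by
  set κ := L ^ (-(2 : ℝ) / 3)
  have hκ : 0 < κ := Real.rpow_pos_of_pos hL _
  set K' := K + 1 / (4 * δ)
  have hKK' : K ≤ K' := le_add_of_nonneg_right (by positivity)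
  have hK' : 0 < K' := by positivity
  have hδ' : 0 < 1 - δ := sub_pos.2 hδ₁
  set σ := (1 - δ) / K' with hσ_def
  have hσ : 0 < σ := by positivity
  have hKσ : K ≤ σ⁻¹ := by
    rw [hσ_def, inv_div, le_div_iff₀ hδ']
    nlinarith
  have hn (n : ℕ) : (0 : ℝ) < (n + 1 : ℕ) := by positivity
  choose u hu hi hupper using fun n : ℕ =>
    exists_setIntegral_slabEnergy_div_le hχ hL (hn n) (inv_nonneg.2 hσ.le) hKσ hcut
  have hpos : ∀ᵐ s ∂volume.restrict (Ioc 0 σ⁻¹), 0 < s :=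
    (ae_restrict_mem measurableSet_Ioc).mono fun s hs => hs.1
  have hbdd (n : ℕ) (s : ℝ) (hs : 0 < s) :
      -(K' ^ 2 / κ) ≤ 2 * (K' ^ 2 / κ) * (eD (s * σ) (↑(n + 1) * √s) / (↑(n + 1) * √s) ^ 2) := by
    have hD := neg_half_le_eD_div (mul_pos hs hσ).le (mul_pos (hn n) (Real.sqrt_pos.2 hs))
    nlinarith [show 0 ≤ K' ^ 2 / κ by positivity]
  have hfatou := integral_le_of_tendsto_of_le
    ((hg.integrableOn_comp_mul_right hσ σ⁻¹).const_mul (2 * (K' ^ 2 / κ)))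
    (fun n => (((hi n).add ((hi n).comp_sub_left (-1))).div_const _).integrableOn)
    (fun n => hpos.mono (hbdd n))
    (fun n => hpos.mono fun s hs =>
      eD_div_le_slabEnergy_add_reflect hχ hK hκ hδ hδ₁.le hs n.succ_pos (hu n))
    (hpos.mono fun s hs => (hg.tendsto_natCast_succ_mul (mul_pos hs hσ)
      (Real.sqrt_pos.2 hs)).const_mul _) hupper (hE.tendsto_natCast_succ hL _ _)
  rw [integral_const_mul, setIntegral_Ioc_comp_mul_right g hσ] at hfatou
  refine le_of_eq_of_le ?_ hfatou
  rw [hσ_def]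
  field_simp

end StripLimit

/-! ### Choice of the parameters -/

section Parameters

variable {g E : ℝ → ℝ} {a c m q e I : ℝ}

lemma pow_three_rpow_neg_div_three (hq : 0 ≤ q) (k : ℝ) : (q ^ 3) ^ (-k / 3) = q ^ (-k) := by
  rw [← Real.rpow_natCast, ← Real.rpow_mul hq]
  congr 1
  push_cast
  ring

lemma one_add_mul_pow_le (ha : 0 ≤ a) (hq : 0 ≤ q) (hq₁ : q ≤ 1) (k : ℕ) :
    (1 + a * q) ^ k ≤ 1 + ((1 + a) ^ k - 1) * q := by
  have := (convexOn_pow k).2 (x := 1) (y := 1 + a) (mem_Ici.2 zero_le_one)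
    (mem_Ici.2 (by positivity)) (sub_nonneg.2 hq₁) hq (sub_add_cancel 1 q)
  simp only [smul_eq_mul, one_pow, mul_one] at this
  calc (1 + a * q) ^ k = (1 - q + q * (1 + a)) ^ k := by ring
    _ ≤ 1 - q + q * (1 + a) ^ k := this
    _ = 1 + ((1 + a) ^ k - 1) * q := by ring

lemma one_add_mul_pow_three_div_le (ha : 0 ≤ a) (hq : 0 ≤ q) (hq₄ : q ≤ 1 / 4) :
    (1 + a * q) ^ 3 / ((1 - q) * (1 - 2 * q)) ≤ 1 + 9 * (1 + a) ^ 3 * q := by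
  have hinv : 1 ≤ (1 + 8 * q) * ((1 - q) * (1 - 2 * q)) := by nlinarith [sq_nonneg q]
  have hpow : (1 + a * q) ^ 3 ≤ 1 + ((1 + a) ^ 3 - 1) * q :=
    one_add_mul_pow_le ha hq (by linarith) 3
  have hB : 1 ≤ (1 + a) ^ 3 := one_le_pow₀ (by linarith)
  rw [div_le_iff₀ (mul_pos (by linarith) (by linarith))]
  calc (1 + a * q) ^ 3 ≤ (1 + ((1 + a) ^ 3 - 1) * q) * 1 := by rwa [mul_one]
    _ ≤ (1 + ((1 + a) ^ 3 - 1) * q) * ((1 + 8 * q) * ((1 - q) * (1 - 2 * q))) := by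
        gcongr
    _ ≤ (1 + 9 * (1 + a) ^ 3 * q) * ((1 - q) * (1 - 2 * q)) := by
        rw [← mul_assoc]
        refine mul_le_mul_of_nonneg_right ?_ (mul_nonneg (by linarith) (by linarith))
        nlinarith [mul_nonneg hq (sub_nonneg.2 hB), mul_nonneg hq (mul_nonneg hq (sub_nonneg.2 hB))]

lemma one_add_mul_sq_div_le (hc : 0 ≤ c) (hq : 0 < q) (hq₄ : q ≤ 1 / 4) :
    (1 + c * q) ^ 2 / (2 * q ^ 2 * (1 - 2 * q)) ≤ (1 + c) ^ 2 / q ^ 3 := by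
  have hcq : c * q ≤ c := mul_le_of_le_one_right hc (by linarith)
  gcongr ?_ ^ 2 / ?_
  · linarith
  · nlinarith [pow_pos hq 2]

/- Since `I ≤ 0`, the left-hand side is nonpositive, so `m` may be replaced by `1 - 2 * q`. -/
lemma two_div_mul_sub_le_of_mul_le (ha : 0 ≤ a) (hc : 0 ≤ c) (hq : 0 < q) (hq₄ : q ≤ 1 / 4)
    (hI : -(1 / 2) ≤ I) (hI₀ : I ≤ 0) (hm : 1 - 2 * q ≤ m)
    (h : 2 * (1 + a * q) ^ 3 / ((1 - q) * q ^ 4) * I ≤ m * e + (1 + c * q) ^ 2 / (2 * q ^ 2)) :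
    2 / q ^ 4 * I - (9 * (1 + a) ^ 3 + (1 + c) ^ 2) / q ^ 3 ≤ e := by
  have hd : 0 < 1 - 2 * q := by linarith
  have hq₁ : 0 < 1 - q := by linarith
  set X := 2 * (1 + a * q) ^ 3 / ((1 - q) * q ^ 4) * I - (1 + c * q) ^ 2 / (2 * q ^ 2)
  have hX₀ : X ≤ 0 :=
    sub_nonpos.2 <| (mul_nonpos_of_nonneg_of_nonpos (by positivity) hI₀).trans (by positivity)
  have hX : X ≤ e * (1 - 2 * q) := by
    rcases le_or_gt 0 e with he | he
    · exact hX₀.trans (by positivity)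
    · nlinarith
  calc 2 / q ^ 4 * I - (9 * (1 + a) ^ 3 + (1 + c) ^ 2) / q ^ 3
      = 2 / q ^ 4 * I + 18 * (1 + a) ^ 3 / q ^ 3 * (-(1 / 2)) - (1 + c) ^ 2 / q ^ 3 := by ring
    _ ≤ 2 / q ^ 4 * I + 18 * (1 + a) ^ 3 / q ^ 3 * I - (1 + c) ^ 2 / q ^ 3 := by gcongr
    _ = 2 / q ^ 4 * ((1 + 9 * (1 + a) ^ 3 * q) * I) - (1 + c) ^ 2 / q ^ 3 := by field_simp; ring
    _ ≤ 2 / q ^ 4 * ((1 + a * q) ^ 3 / ((1 - q) * (1 - 2 * q)) * I) -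
          (1 + c * q) ^ 2 / (2 * q ^ 2 * (1 - 2 * q)) := by
        refine sub_le_sub (mul_le_mul_of_nonneg_left ?_ (by positivity))
          (one_add_mul_sq_div_le hc hq hq₄)
        exact mul_le_mul_of_nonpos_right (one_add_mul_pow_three_div_le ha hq.le hq₄) hI₀
    _ = X / (1 - 2 * q) := by simp only [X]; field_simp
    _ ≤ e := (div_le_iff₀ hd).2 hX

/- The parameters are `L = q³`, `δ = q` and `K = q⁻² + 8 a q⁻¹`: the steep sides of the cutoff have
energy of order `a q⁻¹`, and replacing the potential by its tangent adds `1 / (4 * q)` to `K`. -/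
lemma mul_integral_le_steepCutoff (hg : IsLimitG g) (hE : IsLimitE E) (hq : 0 < q)
    (hq₄ : q ≤ 1 / 4) :
    2 * (1 + (8 * transitionEnergy + 1 / 4) * q) ^ 3 / ((1 - q) * q ^ 4) *
        ∫ b in (0 : ℝ)..1, g b ≤
      (∫ y, steepCutoff q y ^ 2) * E (q ^ 3) +
        (1 + 8 * transitionEnergy * q) ^ 2 / (2 * q ^ 2) := by
  have ha := transitionEnergy_nonneg
  have hκ : (q ^ 3) ^ (-(2 : ℝ) / 3) = 1 / q ^ 2 := by
    rw [pow_three_rpow_neg_div_three hq.le, Real.rpow_neg hq.le, Real.rpow_two, one_div]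
  set a := transitionEnergy
  have hmass : 1 / 2 ≤ ∫ y, steepCutoff q y ^ 2 := by
    linarith [one_sub_two_mul_le_integral_steepCutoff_sq hq]
  have hcut : ∫ y, deriv (steepCutoff q) y ^ 2 ≤
      ((1 + 8 * a * q) / q ^ 2 - (q ^ 3) ^ (-(2 : ℝ) / 3)) * ∫ y, steepCutoff q y ^ 2 :=
    calc ∫ y, deriv (steepCutoff q) y ^ 2 ≤ 4 * a / q := integral_deriv_steepCutoff_sq_le hq
      _ = 8 * a / q * (1 / 2) := by ring
      _ ≤ 8 * a / q * ∫ y, steepCutoff q y ^ 2 := by gcongr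
      _ = _ := by rw [hκ]; congr 1; field_simp; ring
  have hmain := mul_integral_le_of_isSlabCutoff hg hE (isSlabCutoff_steepCutoff hq)
    (pow_pos hq 3) (by positivity) hq (by linarith) hcut
  have hK' : (1 + 8 * a * q) / q ^ 2 + 1 / (4 * q) = (1 + (8 * a + 1 / 4) * q) / q ^ 2 := by
    field_simp
    ring
  rw [hκ, hK'] at hmain
  convert hmain using 2
  · have : 0 < 1 - q := by linarith
    field_simp
  · field_simp

end Parameters

/-- Lower bound: `E(L) ≥ 2 L^{-4/3} ∫₀¹ g(b) db - C L⁻¹` for small `L`. -/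
theorem E_lower_bound (g E : ℝ → ℝ) (hg : IsLimitG g) (hE : IsLimitE E) :
    ∃ L₀ > (0:ℝ), ∃ C > (0:ℝ), ∀ L : ℝ, 0 < L → L < L₀ →
      E L ≥ 2 * L ^ (-(4:ℝ)/3) * (∫ b in (0:ℝ)..1, g b) - C * L⁻¹ := by
  set a := transitionEnergy
  have ha : 0 ≤ a := transitionEnergy_nonneg
  refine ⟨1 / 64, by norm_num, 9 * (1 + (8 * a + 1 / 4)) ^ 3 + (1 + 8 * a) ^ 2, by positivity,
    fun L hL hL₀ => ?_⟩
  obtain ⟨q, hq, rfl⟩ : ∃ q : ℝ, 0 < q ∧ q ^ 3 = L :=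
    ⟨L ^ (3 : ℝ)⁻¹, Real.rpow_pos_of_pos hL _, Real.rpow_inv_natCast_pow hL.le three_ne_zero⟩
  have hq₄ : q ≤ 1 / 4 := le_of_not_gt fun h => by
    linarith [pow_lt_pow_left₀ h (by norm_num) three_ne_zero]
  have hfinal := two_div_mul_sub_le_of_mul_le (by positivity) (by positivity) hq hq₄
    hg.neg_half_le_integral hg.integral_nonpos (one_sub_two_mul_le_integral_steepCutoff_sq hq)
    (mul_integral_le_steepCutoff hg hE hq hq₄)
  rwa [ge_iff_le, pow_three_rpow_neg_div_three hq.le, Real.rpow_neg hq.le, ← div_eq_mul_inv,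
    ← div_eq_mul_inv, Real.rpow_ofNat]

end
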